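/- arXiv:2411.10310 — 11 statements merged into one kernel-verified Lean document; each statement's English description precedes it below -/
import Mathlib

section
/- Let S1, S2 ⊆ N and let α ≥ 0 satisfy ∑_{i∈S1} v_i ≤ α·∑_{i∈S2} v_i. Then R̄(S1) ≥ R(S2)/(α+1), where R̄(S1) = max{R(S) : S1 ⊆ S ⊆ N} is the expected revenue of an optimal expansion of S1. -/
open Finset

/-- Expected revenue of an assortment under the MNL model. -/
noncomputable def mnlRev {n : ℕ} (r v : Fin n → ℝ) (S : Finset (Fin n)) : ℝ :=
  (∑ i ∈ S, r i * v i) / (1 + ∑ i ∈ S, v i)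

theorem stmt0 {n : ℕ} (r v : Fin n → ℝ)
    (hr : ∀ i, 0 ≤ r i) (hv : ∀ i, 0 < v i)
    (S1 S2 : Finset (Fin n)) (α : ℝ) (hα : 0 ≤ α)
    (h : ∑ i ∈ S1, v i ≤ α * ∑ i ∈ S2, v i) :
    ∃ S : Finset (Fin n), S1 ⊆ S ∧ mnlRev r v S2 / (α + 1) ≤ mnlRev r v S := by
  -- The expansion `S1 ∪ S2` earns at least the numerator of `S2`, and its denominator is at most
  -- `1 + (α + 1) * ∑ i ∈ S2, v i ≤ (α + 1) * (1 + ∑ i ∈ S2, v i)`.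
  refine ⟨S1 ∪ S2, subset_union_left, ?_⟩
  have hnum : ∑ i ∈ S2, r i * v i ≤ ∑ i ∈ S1 ∪ S2, r i * v i :=
    sum_le_sum_of_subset_of_nonneg subset_union_right
      fun i _ _ => mul_nonneg (hr i) (hv i).le
  have hnum0 : 0 ≤ ∑ i ∈ S1 ∪ S2, r i * v i :=
    sum_nonneg fun i _ => mul_nonneg (hr i) (hv i).le
  have hU : 0 ≤ ∑ i ∈ S1 ∪ S2, v i := sum_nonneg fun i _ => (hv i).le
  have hinter : 0 ≤ ∑ i ∈ S1 ∩ S2, v i := sum_nonneg fun i _ => (hv i).le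
  have hsplit : ∑ i ∈ S1 ∪ S2, v i + ∑ i ∈ S1 ∩ S2, v i = ∑ i ∈ S1, v i + ∑ i ∈ S2, v i :=
    sum_union_inter
  unfold mnlRev
  rw [div_div]
  apply div_le_div₀ hnum0 hnum
  · linarith
  · linarith
end

section
/- Assume K ≥ 1 and let H_K = ∑_{k=1}^K 1/k. Suppose Ŝ ⊆ N satisfies the covering constraints and ∑_{i∈Ŝ} v_i ≤ H_K·∑_{i∈S} v_i for every S ⊆ N satisfying the covering constraints (the guarantee achieved by the greedy algorithm for the weighted set cover problem min{∑_{i∈S} v_i : S satisfies the covering constraints}). Then for every S* ⊆ N satisfying the covering constraints, max{R(S) : Ŝ ⊆ S ⊆ N} ≥ R(S*)/(H_K + 1) ≥ R(S*)/(log K + 2), where log denotes the natural logarithm; in particular the optimal expansion of Ŝ satisfies the covering constraints and is a 1/(log K + 2)-approximation to (DAOC). -/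
/-!
The expansion `S = Shat ∪ Sstar` already attains the bound. Since revenues are nonnegative, its
numerator is at least that of `Sstar`; and since `Sstar` is itself a feasible cover, the greedy
guarantee gives `1 + v(S) ≤ 1 + (HK + 1) * v(Sstar) ≤ (HK + 1) * (1 + v(Sstar))` for the
denominator. The second inequality is the standard bound `HK ≤ 1 + log K` on harmonic numbers.
-/

open Finset

theorem stmt1 {n K : ℕ} (hK : 1 ≤ K) (r v : Fin n → ℝ)
    (hr : ∀ i, 0 ≤ r i) (hv : ∀ i, 0 < v i)
    (C : Fin K → Finset (Fin n)) (ℓ : Fin K → ℕ) (hℓ : ∀ k, ℓ k ≤ (C k).card)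
    (HK : ℝ) (hHK : HK = ∑ k ∈ Finset.range K, (1 : ℝ) / (k + 1))
    (Shat : Finset (Fin n))
    (hShatCov : ∀ k, ℓ k ≤ (Shat ∩ C k).card)
    (hGreedy : ∀ S : Finset (Fin n), (∀ k, ℓ k ≤ (S ∩ C k).card) →
      ∑ i ∈ Shat, v i ≤ HK * ∑ i ∈ S, v i)
    (Sstar : Finset (Fin n)) (hSstarCov : ∀ k, ℓ k ≤ (Sstar ∩ C k).card) :
    ∃ S : Finset (Fin n), Shat ⊆ S ∧ (∀ k, ℓ k ≤ (S ∩ C k).card) ∧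
      mnlRev r v Sstar / (HK + 1) ≤ mnlRev r v S ∧
      mnlRev r v Sstar / (Real.log K + 2) ≤ mnlRev r v Sstar / (HK + 1) := by
  have hHK0 : 0 ≤ HK := by
    rw [hHK]
    positivity
  have hHKlog : HK ≤ 1 + Real.log K := by
    have h := harmonic_le_one_add_log K
    have e : ((harmonic K : ℚ) : ℝ) = HK := by
      rw [hHK, harmonic]
      push_cast
      simp only [one_div]
    rwa [e] at h
  have hrv : ∀ i, 0 ≤ r i * v i := fun i => mul_nonneg (hr i) (hv i).le
  have hstar0 : 0 ≤ ∑ i ∈ Sstar, v i := Finset.sum_nonneg fun i _ => (hv i).le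
  have hnum0 : 0 ≤ ∑ i ∈ Sstar, r i * v i := Finset.sum_nonneg fun i _ => hrv i
  have hrev0 : 0 ≤ mnlRev r v Sstar := div_nonneg hnum0 (by linarith)
  refine ⟨Shat ∪ Sstar, Finset.subset_union_left, fun k => ?_, ?_, ?_⟩
  · exact (hShatCov k).trans (Finset.card_le_card
      (Finset.inter_subset_inter_right Finset.subset_union_left))
  · have hnum : ∑ i ∈ Sstar, r i * v i ≤ ∑ i ∈ Shat ∪ Sstar, r i * v i :=
      Finset.sum_le_sum_of_subset_of_nonneg Finset.subset_union_right fun i _ _ => hrv i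
    have hden0 : 0 ≤ ∑ i ∈ Shat ∪ Sstar, v i := Finset.sum_nonneg fun i _ => (hv i).le
    have hunion : ∑ i ∈ Shat ∪ Sstar, v i ≤ ∑ i ∈ Shat, v i + ∑ i ∈ Sstar, v i := by
      have h := Finset.sum_union_inter (s₁ := Shat) (s₂ := Sstar) (f := v)
      have h' : 0 ≤ ∑ i ∈ Shat ∩ Sstar, v i := Finset.sum_nonneg fun i _ => (hv i).le
      linarith
    have hgreedy := hGreedy Sstar hSstarCov
    rw [mnlRev, mnlRev, div_div]
    exact div_le_div₀ (hnum0.trans hnum) hnum (by linarith) (by linarith)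
  · exact div_le_div_of_nonneg_left hrev0 (by linarith) (by linarith)
end

section
/- There exists an optimal solution q of (RAOC) whose support {S ⊆ N : q(S) > 0} is totally ordered by inclusion, i.e., for any S, S' with q(S) > 0 and q(S') > 0, either S ⊆ S' or S' ⊆ S. -/
/-!
Choose `q` lexicographically: among the maximizers of the objective over the (compact) feasible
set, let `q` maximize the expected assortment size. Two exchange arguments show that the support
of `q` is a chain.

* If `q S > 0` and `i ∉ S`, then `r i < R(S)`. Otherwise moving the mass of `S` to `S ∪ {i}` keeps
  feasibility, does not decrease the objective and strictly increases the expected size.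
* If `S` and `S'` are in the support and not nested, say with `R(S') ≤ R(S)`, then by the first
  point every product of `S \ S'` and of `S' \ S` has revenue below `R(S)`, and deleting `S \ S'`
  from `S` gives `R(S) < R(S ∩ S')`. So both differences have average revenue below
  `R(S ∩ S')`, and in this regime `R` is strictly supermodular
  (`mnlRev_uncross`): `R(S) + R(S') < R(S ∪ S') + R(S ∩ S')`. Moving equal mass from `S`, `S'` to
  `S ∪ S'`, `S ∩ S'` preserves all expected category counts, since these are modular, and strictly
  increases the objective, a contradiction.
-/

open Finset

/-- Feasibility for the randomized problem (RAOC). -/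
def raocFeasible {n K : ℕ} (C : Fin K → Finset (Fin n)) (ℓ : Fin K → ℕ)
    (q : Finset (Fin n) → ℝ) : Prop :=
  (∀ S, 0 ≤ q S) ∧ (∑ S : Finset (Fin n), q S = 1) ∧
    ∀ k, (ℓ k : ℝ) ≤ ∑ S : Finset (Fin n), ((S ∩ C k).card : ℝ) * q S

/-- Objective of (RAOC). -/
noncomputable def raocObj {n : ℕ} (r v : Fin n → ℝ) (q : Finset (Fin n) → ℝ) : ℝ :=
  ∑ S : Finset (Fin n), mnlRev r v S * q S

/-- The function obtained from `q` by transferring mass `ε` from `S` to `T`. -/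
def moveMass {α : Type*} [DecidableEq α] (q : α → ℝ) (S T : α) (ε : ℝ) : α → ℝ :=
  fun U => q U + ε * ((if U = T then 1 else 0) - (if U = S then 1 else 0))

lemma sum_mul_moveMass {α : Type*} [DecidableEq α] [Fintype α] (g q : α → ℝ) (S T : α) (ε : ℝ) :
    ∑ U, g U * moveMass q S T ε U = ∑ U, g U * q U + ε * (g T - g S) := by
  have h : ∀ U, g U * moveMass q S T ε U =
      g U * q U + ε * ((if U = T then g U else 0) - (if U = S then g U else 0)) := by
    intro U
    unfold moveMass
    split_ifs <;> ring
  simp only [h, Finset.sum_add_distrib, ← Finset.mul_sum, Finset.sum_sub_distrib,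
    Finset.sum_ite_eq', Finset.mem_univ, if_true]

lemma moveMass_nonneg {α : Type*} [DecidableEq α] {q : α → ℝ} {S T : α} {ε : ℝ}
    (hq : ∀ U, 0 ≤ q U) (hε : 0 ≤ ε) (hS : ε ≤ q S) (U : α) : 0 ≤ moveMass q S T ε U := by
  have := hq U
  unfold moveMass
  split_ifs with h1 h2 h2
  · simpa using this
  · simp; linarith
  · subst h2; simp; linarith
  · simpa using this

/-- Mass only decreases at the source of the transfer. -/
lemma le_moveMass {α : Type*} [DecidableEq α] {q : α → ℝ} {S T U : α} {ε : ℝ}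
    (hε : 0 ≤ ε) (hU : U ≠ S) : q U ≤ moveMass q S T ε U := by
  unfold moveMass
  split_ifs <;> simp [hε]

lemma sum_moveMass {α : Type*} [DecidableEq α] [Fintype α] (q : α → ℝ) (S T : α) (ε : ℝ) :
    ∑ U, moveMass q S T ε U = ∑ U, q U := by
  simpa using sum_mul_moveMass (fun _ => 1) q S T ε

lemma isCompact_raocFeasible {n K : ℕ} (C : Fin K → Finset (Fin n)) (ℓ : Fin K → ℕ) :
    IsCompact {q | raocFeasible C ℓ q} := by
  refine (isCompact_Icc (a := (0 : Finset (Fin n) → ℝ)) (b := 1)).of_isClosed_subset ?_ ?_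
  · simp only [raocFeasible, Set.ofPred_and, Set.ofPred_forall]
    refine (isClosed_iInter fun S => isClosed_le (by fun_prop) (by fun_prop)).inter
      ((isClosed_eq (by fun_prop) (by fun_prop)).inter
      (isClosed_iInter fun k => isClosed_le (by fun_prop) (by fun_prop)))
  · rintro q ⟨h0, h1, -⟩
    refine ⟨h0, fun S => ?_⟩
    rw [Pi.one_apply, ← h1]
    exact Finset.single_le_sum (f := q) (fun U _ => h0 U) (Finset.mem_univ S)

/-- Optimal solutions exist, and one of them has the largest expected size among all of them. -/
lemma exists_lex_optimal {n K : ℕ} (r v : Fin n → ℝ)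
    (C : Fin K → Finset (Fin n)) (ℓ : Fin K → ℕ) (hℓ : ∀ k, ℓ k ≤ (C k).card) :
    ∃ q : Finset (Fin n) → ℝ, raocFeasible C ℓ q ∧
      (∀ q', raocFeasible C ℓ q' → raocObj r v q' ≤ raocObj r v q) ∧
      ∀ q', raocFeasible C ℓ q' → raocObj r v q ≤ raocObj r v q' →
        ∑ S : Finset (Fin n), (S.card : ℝ) * q' S ≤ ∑ S : Finset (Fin n), (S.card : ℝ) * q S := by
  have hc := isCompact_raocFeasible C ℓ
  have hobj : Continuous (raocObj r v) := by unfold raocObj; fun_prop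
  have hne : {q | raocFeasible C ℓ q}.Nonempty := by
    refine ⟨fun S => if S = Finset.univ then 1 else 0, fun S => ?_, by simp, fun k => ?_⟩
    · dsimp only; split_ifs <;> norm_num
    · simpa using hℓ k
  obtain ⟨q₀, hq₀, hmax⟩ := hc.exists_isMaxOn hne hobj.continuousOn
  have hc2 : IsCompact ({q | raocFeasible C ℓ q} ∩ {q | raocObj r v q₀ ≤ raocObj r v q}) :=
    hc.inter_right (isClosed_le continuous_const hobj)
  obtain ⟨q, ⟨hq, hqo⟩, hqmax⟩ := hc2.exists_isMaxOn ⟨q₀, hq₀, le_refl (raocObj r v q₀)⟩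
    (f := fun q => ∑ S : Finset (Fin n), (S.card : ℝ) * q S) (by fun_prop)
  exact ⟨q, hq, fun q' hq' => (hmax hq').trans hqo,
    fun q' hq' h => hqmax ⟨hq', le_trans hqo h⟩⟩

lemma one_add_sum_pos {n : ℕ} {v : Fin n → ℝ} (hv : ∀ i, 0 < v i) (S : Finset (Fin n)) :
    0 < 1 + ∑ i ∈ S, v i := by
  have := Finset.sum_nonneg (s := S) fun i _ => (hv i).le
  linarith

lemma mnlRev_le_insert {n : ℕ} {r v : Fin n → ℝ} (hv : ∀ i, 0 < v i) {S : Finset (Fin n)}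
    {i : Fin n} (hi : i ∉ S) (h : mnlRev r v S ≤ r i) :
    mnlRev r v S ≤ mnlRev r v (insert i S) := by
  have hS := one_add_sum_pos hv S
  have hvi := hv i
  have h1 : ∑ j ∈ S, r j * v j = mnlRev r v S * (1 + ∑ j ∈ S, v j) := by
    unfold mnlRev; field_simp
  have h2 := mul_le_mul_of_nonneg_right h hvi.le
  conv_rhs => unfold mnlRev
  rw [Finset.sum_insert hi, Finset.sum_insert hi, le_div_iff₀ (by linarith), h1]
  nlinarith

/-- The strict supermodularity inequality for the ratios `f / w`: adding to the base ratio two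
blocks `(α, a)` and `(β, b)`, each with ratio below `f / w`, hurts less jointly than separately. -/
lemma ratio_supermodular {f w α a β b : ℝ} (hw : 0 < w) (ha : 0 < a) (hb : 0 < b)
    (hα : α < f / w * a) (hβ : β < f / w * b) :
    (f + α) / (w + a) + (f + β) / (w + b) < (f + (α + β)) / (w + (a + b)) + f / w := by
  obtain ⟨ρ, hρ⟩ : ∃ ρ, ρ = f / w := ⟨_, rfl⟩
  rw [← hρ] at hα hβ ⊢
  have hf : f = ρ * w := by rw [hρ]; field_simp
  have e1 : (f + α) / (w + a) = ρ - (ρ * a - α) / (w + a) := by rw [hf]; field_simp; ring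
  have e2 : (f + β) / (w + b) = ρ - (ρ * b - β) / (w + b) := by rw [hf]; field_simp; ring
  have e3 : (f + (α + β)) / (w + (a + b)) =
      ρ - ((ρ * a - α) / (w + (a + b)) + (ρ * b - β) / (w + (a + b))) := by
    rw [hf]; field_simp; ring
  have l1 : (ρ * a - α) / (w + (a + b)) < (ρ * a - α) / (w + a) :=
    div_lt_div_of_pos_left (by linarith) (by linarith) (by linarith)
  have l2 : (ρ * b - β) / (w + (a + b)) < (ρ * b - β) / (w + b) :=
    div_lt_div_of_pos_left (by linarith) (by linarith) (by linarith)
  rw [e1, e2, e3]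
  linarith

lemma sum_rev_lt {n : ℕ} {r v : Fin n → ℝ} (hv : ∀ i, 0 < v i) {A : Finset (Fin n)}
    (hA : A.Nonempty) {c : ℝ} (h : ∀ i ∈ A, r i < c) :
    ∑ i ∈ A, r i * v i < c * ∑ i ∈ A, v i := by
  rw [Finset.mul_sum]
  exact Finset.sum_lt_sum_of_nonempty hA fun i hi => mul_lt_mul_of_pos_right (h i hi) (hv i)

/-- Uncrossing two non-nested assortments strictly increases total revenue, provided every product
missing from one of them has revenue below that assortment's. -/
lemma mnlRev_uncross {n : ℕ} {r v : Fin n → ℝ} (hv : ∀ i, 0 < v i) {S S' : Finset (Fin n)}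
    (hS : ∀ i, i ∉ S → r i < mnlRev r v S) (hS' : ∀ i, i ∉ S' → r i < mnlRev r v S')
    (h : ¬ S ⊆ S') (h' : ¬ S' ⊆ S) (hle : mnlRev r v S' ≤ mnlRev r v S) :
    mnlRev r v S + mnlRev r v S' < mnlRev r v (S ∪ S') + mnlRev r v (S ∩ S') := by
  have hA : (S \ S').Nonempty := Finset.sdiff_nonempty.2 h
  have hB : (S' \ S).Nonempty := Finset.sdiff_nonempty.2 h'
  have dS : ∀ g : Fin n → ℝ, ∑ i ∈ S, g i = ∑ i ∈ S ∩ S', g i + ∑ i ∈ S \ S', g i := fun g =>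
    (Finset.sum_inter_add_sum_sdiff S S' g).symm
  have dS' : ∀ g : Fin n → ℝ, ∑ i ∈ S', g i = ∑ i ∈ S ∩ S', g i + ∑ i ∈ S' \ S, g i := fun g => by
    rw [Finset.inter_comm]; exact (Finset.sum_inter_add_sum_sdiff S' S g).symm
  have dU : ∀ g : Fin n → ℝ, ∑ i ∈ S ∪ S', g i =
      ∑ i ∈ S ∩ S', g i + (∑ i ∈ S \ S', g i + ∑ i ∈ S' \ S, g i) := fun g => by
    have := Finset.sum_union_inter (s₁ := S) (s₂ := S') (f := g)
    rw [dS g, dS' g] at this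
    linarith
  have ha : 0 < ∑ i ∈ S \ S', v i := Finset.sum_pos (fun i _ => hv i) hA
  have hb : 0 < ∑ i ∈ S' \ S, v i := Finset.sum_pos (fun i _ => hv i) hB
  have hw := one_add_sum_pos hv (S ∩ S')
  have hα := sum_rev_lt (r := r) hv hA (c := mnlRev r v S) fun i hi =>
    (hS' i (Finset.mem_sdiff.1 hi).2).trans_le hle
  have hβ := sum_rev_lt (r := r) hv hB (c := mnlRev r v S) fun i hi =>
    hS i (Finset.mem_sdiff.1 hi).2
  -- Deleting `S \ S'`, whose average revenue is below `R(S)`, raises the revenue.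
  have hI : mnlRev r v S < mnlRev r v (S ∩ S') := by
    have e : ∑ i ∈ S, r i * v i = mnlRev r v S * (1 + ∑ i ∈ S, v i) := by
      have := one_add_sum_pos hv S
      unfold mnlRev; field_simp
    rw [dS, dS v] at e
    conv_rhs => unfold mnlRev
    rw [lt_div_iff₀ hw]
    nlinarith
  have key := ratio_supermodular hw ha hb
    (hα.trans (mul_lt_mul_of_pos_right hI ha)) (hβ.trans (mul_lt_mul_of_pos_right hI hb))
  unfold mnlRev
  rw [dU, dU v, dS, dS v, dS', dS' v]
  simpa only [add_assoc] using key

theorem stmt2 {n K : ℕ} (r v : Fin n → ℝ)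
    (hr : ∀ i, 0 ≤ r i) (hv : ∀ i, 0 < v i)
    (C : Fin K → Finset (Fin n)) (ℓ : Fin K → ℕ) (hℓ : ∀ k, ℓ k ≤ (C k).card) :
    ∃ q : Finset (Fin n) → ℝ,
      raocFeasible C ℓ q ∧
      (∀ q' : Finset (Fin n) → ℝ, raocFeasible C ℓ q' → raocObj r v q' ≤ raocObj r v q) ∧
      ∀ S S' : Finset (Fin n), 0 < q S → 0 < q S' → S ⊆ S' ∨ S' ⊆ S := by
  obtain ⟨q, hq, hopt, hlex⟩ := exists_lex_optimal r v C ℓ hℓ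
  refine ⟨q, hq, hopt, ?_⟩
  obtain ⟨h0, h1, hC⟩ := hq
  have hmiss : ∀ S, 0 < q S → ∀ i, i ∉ S → r i < mnlRev r v S := by
    intro S hS i hi
    by_contra! hge
    have hobj : raocObj r v q ≤ raocObj r v (moveMass q S (insert i S) (q S)) := by
      unfold raocObj
      rw [sum_mul_moveMass]
      have := mul_nonneg hS.le (sub_nonneg.2 (mnlRev_le_insert hv hi hge))
      linarith
    have hfeas : raocFeasible C ℓ (moveMass q S (insert i S) (q S)) := by
      refine ⟨moveMass_nonneg h0 hS.le le_rfl, by rw [sum_moveMass, h1], fun k => ?_⟩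
      rw [sum_mul_moveMass (fun U => ((U ∩ C k).card : ℝ))]
      have hsub : ((S ∩ C k).card : ℝ) ≤ ((insert i S ∩ C k).card : ℝ) := by
        exact_mod_cast Finset.card_le_card
          (Finset.inter_subset_inter_right (Finset.subset_insert i S))
      have := mul_nonneg hS.le (sub_nonneg.2 hsub)
      linarith [hC k]
    have := hlex _ hfeas hobj
    rw [sum_mul_moveMass (fun U : Finset (Fin n) => (U.card : ℝ)),
      Finset.card_insert_of_notMem hi] at this
    push_cast at this
    nlinarith
  -- The second exchange, for an ordered pair, so that the smaller revenue may be put second.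
  have hnest : ∀ S S', 0 < q S → 0 < q S' → mnlRev r v S' ≤ mnlRev r v S →
      S ⊆ S' ∨ S' ⊆ S := by
    intro S S' hS hS' hle
    by_contra! hcon
    obtain ⟨hn, hn'⟩ := hcon
    have hne : S' ≠ S := fun e => hn (e ▸ Finset.Subset.refl _)
    have hgain := mnlRev_uncross hv (hmiss S hS) (hmiss S' hS') hn hn' hle
    obtain ⟨ε, hε⟩ : ∃ ε, ε = min (q S) (q S') := ⟨_, rfl⟩
    have hε0 : 0 < ε := hε ▸ lt_min hS hS'
    have hεS : ε ≤ q S := hε ▸ min_le_left _ _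
    have hεS' : ε ≤ q S' := hε ▸ min_le_right _ _
    have hfeas : raocFeasible C ℓ
        (moveMass (moveMass q S (S ∪ S') ε) S' (S ∩ S') ε) := by
      refine ⟨moveMass_nonneg (moveMass_nonneg h0 hε0.le hεS) hε0.le
        (hεS'.trans (le_moveMass hε0.le hne)), by rw [sum_moveMass, sum_moveMass, h1],
        fun k => ?_⟩
      rw [sum_mul_moveMass (fun U => ((U ∩ C k).card : ℝ)),
        sum_mul_moveMass (fun U => ((U ∩ C k).card : ℝ))]
      have hmod : (((S ∪ S') ∩ C k).card : ℝ) + ((S ∩ S' ∩ C k).card : ℝ) =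
          ((S ∩ C k).card : ℝ) + ((S' ∩ C k).card : ℝ) := by
        have := Finset.card_union_add_card_inter (S ∩ C k) (S' ∩ C k)
        rw [← Finset.union_inter_distrib_right, ← Finset.inter_inter_distrib_right] at this
        exact_mod_cast this
      have := congrArg (ε * ·) hmod
      linarith [hC k]
    have := hopt _ hfeas
    unfold raocObj at this
    rw [sum_mul_moveMass, sum_mul_moveMass] at this
    nlinarith
  intro S S' hS hS'
  rcases le_total (mnlRev r v S') (mnlRev r v S) with h | h
  · exact hnest S S' hS hS' h
  · exact (hnest S' S hS' hS h).symm
end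

section
/- Let S_1 ⊇ S_2 ⊇ ⋯ ⊇ S_m be nested subsets of N and let q_1,…,q_m ≥ 0 be real numbers. For each i ∈ N define x_i = ∑_{ℓ=1}^m q_ℓ·1[i ∈ S_ℓ]/(1 + ∑_{j∈S_ℓ} v_j). Then for every i ∈ N, ∑_{ℓ=1}^m q_ℓ·1[i ∈ S_ℓ] = x_i + ∑_{j∈N} v_j·min(x_i, x_j). -/
/-!
Along a nested family any two products `i`, `j` are comparable: every `S l` containing one of them
contains the other, in one of the two directions (`mem_imp_total`). Hence the smaller of `x i` and
`x j` is the sum of `q l / (1 + ∑ k ∈ S l, v k)` over those `l` with both `i, j ∈ S l`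
(`min_eq_sum_both`). After exchanging the two sums, `x i + ∑ j, v j * min (x i) (x j)` collects,
for each `l` with `i ∈ S l`, the factor `1 + ∑ j ∈ S l, v j`, which cancels the denominator.
-/

open Finset

theorem mem_imp_total {n m : ℕ} (S : Fin m → Finset (Fin n))
    (hnest : ∀ l l' : Fin m, l ≤ l' → S l' ⊆ S l) (i j : Fin n) :
    (∀ l, i ∈ S l → j ∈ S l) ∨ (∀ l, j ∈ S l → i ∈ S l) := by
  by_contra! h
  obtain ⟨⟨l, hil, hjl⟩, l', hjl', hil'⟩ := h
  rcases le_total l l' with hle | hle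
  · exact hjl (hnest _ _ hle hjl')
  · exact hil' (hnest _ _ hle hil)

/-- For nonnegative weights `w` on a nested family, the minimum of the total weights of the sets
containing `i` and of those containing `j` is the total weight of the sets containing both. -/
theorem min_eq_sum_both {n m : ℕ} (S : Fin m → Finset (Fin n))
    (hnest : ∀ l l' : Fin m, l ≤ l' → S l' ⊆ S l)
    (w : Fin m → ℝ) (hw : ∀ l, 0 ≤ w l) (i j : Fin n) :
    min (∑ l, if i ∈ S l then w l else 0) (∑ l, if j ∈ S l then w l else 0)
      = ∑ l, if i ∈ S l then (if j ∈ S l then w l else 0) else 0 := by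
  rcases mem_imp_total S hnest i j with h | h
  · rw [min_eq_left]
    · refine Finset.sum_congr rfl fun l _ => ?_
      have := h l
      split_ifs <;> simp_all
    · refine Finset.sum_le_sum fun l _ => ?_
      have := h l
      have := hw l
      split_ifs <;> simp_all
  · rw [min_eq_right]
    · refine Finset.sum_congr rfl fun l _ => ?_
      have := h l
      split_ifs <;> simp_all
    · refine Finset.sum_le_sum fun l _ => ?_
      have := h l
      have := hw l
      split_ifs <;> simp_all

theorem stmt3 {n m : ℕ} (v : Fin n → ℝ) (hv : ∀ j, 0 < v j)
    (S : Fin m → Finset (Fin n))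
    (hnest : ∀ l l' : Fin m, l ≤ l' → S l' ⊆ S l)
    (q : Fin m → ℝ) (hq : ∀ l, 0 ≤ q l)
    (x : Fin n → ℝ)
    (hx : ∀ i, x i =
      ∑ l : Fin m, q l * (if i ∈ S l then (1 : ℝ) else 0) / (1 + ∑ j ∈ S l, v j)) :
    ∀ i : Fin n, ∑ l : Fin m, q l * (if i ∈ S l then (1 : ℝ) else 0)
      = x i + ∑ j : Fin n, v j * min (x i) (x j) := by
  have hD : ∀ l, 0 < 1 + ∑ j ∈ S l, v j := fun l =>
    add_pos_of_pos_of_nonneg one_pos (Finset.sum_nonneg fun j _ => (hv j).le)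
  set w : Fin m → ℝ := fun l => q l / (1 + ∑ j ∈ S l, v j) with hw_def
  have hw : ∀ l, 0 ≤ w l := fun l => div_nonneg (hq l) (hD l).le
  have hx' : ∀ i, x i = ∑ l, if i ∈ S l then w l else 0 := by
    intro i
    rw [hx i]
    refine Finset.sum_congr rfl fun l _ => ?_
    split_ifs <;> simp [hw_def]
  intro i
  have hmin : ∀ j, min (x i) (x j)
      = ∑ l, if i ∈ S l then (if j ∈ S l then w l else 0) else 0 := by
    intro j
    rw [hx' i, hx' j]
    exact min_eq_sum_both S hnest w hw i j
  simp_rw [hmin, Finset.mul_sum]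
  rw [Finset.sum_comm, hx' i, ← Finset.sum_add_distrib]
  refine Finset.sum_congr rfl fun l _ => ?_
  by_cases hi : i ∈ S l
  · have hq' : q l = w l * (1 + ∑ j ∈ S l, v j) := (div_mul_cancel₀ _ (hD l).ne').symm
    simp only [hi, if_true, mul_one, mul_ite, mul_zero, Finset.sum_ite_mem, Finset.univ_inter]
    rw [← Finset.sum_mul, hq']
    ring
  · simp [hi]
end

section
/- For every M > 0 there exists an instance with a single category — namely n = 3 products with revenues r_i ≥ 0 and preference weights v_i > 0, one category C_1 ⊆ N and an integer threshold ℓ_1 with 0 ≤ ℓ_1 ≤ |C_1| — such that the optimal value of (RAOC) is at least M times the optimal value of (DAOC). -/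
/-!
The instance: product `0` has revenue `1` and weight `1`; products `1` and `2` have revenue `0` and
the large weight `4 * M`, and form the category, with threshold `1`.  Every assortment meeting the
threshold contains a heavy worthless product, so its revenue is at most `1 / (2 + 4 * M)`
(`mnlRev_le_of_covering`).  Randomizing uniformly between `{0}` and the full assortment covers
`(0 + 2) / 2 = 1` products of the category on average, and already the half mass on `{0}`, whose
revenue is `1 / 2`, gives expected revenue at least `1 / 4 ≥ M / (2 + 4 * M)`.  The revenues do not
all vanish and the covering optimum is positive, so the gap is a genuine ratio.
-/

open Finset

/-- Revenues of the gap instance. -/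
noncomputable def gapRev : Fin 3 → ℝ := ![1, 0, 0]

/-- Preference weights of the gap instance. -/
noncomputable def gapWeight (M : ℝ) : Fin 3 → ℝ := ![1, 4 * M, 4 * M]

/-- The uniform distribution on the two assortments `{0}` and `{0, 1, 2}`. -/
noncomputable def gapMix (S : Finset (Fin 3)) : ℝ :=
  (if S = {0} then 1 / 2 else 0) + (if S = univ then 1 / 2 else 0)

lemma sum_mul_gapMix (f : Finset (Fin 3) → ℝ) :
    ∑ S : Finset (Fin 3), f S * gapMix S = f {0} / 2 + f univ / 2 := by
  simp only [gapMix, mul_add, mul_ite, mul_zero, Finset.sum_add_distrib, Finset.sum_ite_eq',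
    Finset.mem_univ, if_true]
  ring

lemma gapWeight_pos {M : ℝ} (hM : 0 < M) (i : Fin 3) : 0 < gapWeight M i := by
  fin_cases i <;> simp [gapWeight, hM]

lemma gapRev_nonneg (i : Fin 3) : 0 ≤ gapRev i := by
  fin_cases i <;> simp [gapRev]

lemma mnlRev_gap_nonneg {M : ℝ} (hM : 0 < M) (S : Finset (Fin 3)) :
    0 ≤ mnlRev gapRev (gapWeight M) S := by
  have hv : 0 ≤ ∑ i ∈ S, gapWeight M i := Finset.sum_nonneg fun i _ => (gapWeight_pos hM i).le
  exact div_nonneg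
    (Finset.sum_nonneg fun i _ => mul_nonneg (gapRev_nonneg i) (gapWeight_pos hM i).le)
    (by linarith)

/-- Only product `0` earns revenue, and a covering assortment carries weight at least `4 * M`
besides it. -/
lemma mnlRev_le_of_covering {M : ℝ} (hM : 0 < M) (S : Finset (Fin 3))
    (hS : 1 ≤ (S ∩ {1, 2}).card) :
    mnlRev gapRev (gapWeight M) S ≤ 1 / (2 + 4 * M) := by
  obtain ⟨j, hj⟩ := Finset.card_pos.mp hS
  rw [Finset.mem_inter, Finset.mem_insert, Finset.mem_singleton] at hj
  obtain ⟨hjS, hj⟩ := hj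
  have hj0 : (0 : Fin 3) ≠ j := by rcases hj with rfl | rfl <;> decide
  have hjw : gapWeight M j = 4 * M := by rcases hj with rfl | rfl <;> simp [gapWeight]
  have hnum : ∑ i ∈ S, gapRev i * gapWeight M i = if (0 : Fin 3) ∈ S then 1 else 0 := by
    rw [← Finset.sum_ite_eq' S (0 : Fin 3) fun _ => (1 : ℝ)]
    refine Finset.sum_congr rfl fun i _ => ?_
    fin_cases i <;> simp [gapRev, gapWeight]
  unfold mnlRev
  rw [hnum]
  split_ifs with h0
  · have hsub : ({0, j} : Finset (Fin 3)) ⊆ S := by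
      simp [Finset.insert_subset_iff, h0, hjS]
    have hw := Finset.sum_le_sum_of_subset_of_nonneg hsub
      fun i _ _ => (gapWeight_pos hM i).le
    rw [Finset.sum_pair hj0, hjw] at hw
    have h1 : gapWeight M 0 = 1 := by simp [gapWeight]
    exact one_div_le_one_div_of_le (by linarith) (by linarith)
  · rw [zero_div]
    positivity

theorem stmt6 (M : ℝ) (hM : 0 < M) :
    ∃ (r v : Fin 3 → ℝ) (C1 : Finset (Fin 3)) (ℓ1 : ℕ),
      (∀ i, 0 ≤ r i) ∧ (∀ i, 0 < v i) ∧ ℓ1 ≤ C1.card ∧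
      ∃ q : Finset (Fin 3) → ℝ,
        (∀ S, 0 ≤ q S) ∧ (∑ S : Finset (Fin 3), q S = 1) ∧
        ((ℓ1 : ℝ) ≤ ∑ S : Finset (Fin 3), ((S ∩ C1).card : ℝ) * q S) ∧
        ∀ S : Finset (Fin 3), ℓ1 ≤ (S ∩ C1).card →
          M * mnlRev r v S ≤ ∑ S' : Finset (Fin 3), mnlRev r v S' * q S' := by
  refine ⟨gapRev, gapWeight M, {1, 2}, 1, gapRev_nonneg, gapWeight_pos hM, by decide, gapMix,
    ?_, ?_, ?_, ?_⟩
  · intro S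
    unfold gapMix
    positivity
  · have h := sum_mul_gapMix fun _ => 1
    simp only [one_mul] at h
    rw [h]
    norm_num
  · rw [sum_mul_gapMix fun S => ((S ∩ {1, 2}).card : ℝ)]
    have h0 : (({0} : Finset (Fin 3)) ∩ {1, 2}).card = 0 := by decide
    have h2 : ((univ : Finset (Fin 3)) ∩ {1, 2}).card = 2 := by decide
    rw [h0, h2]
    norm_num
  · intro S hS
    rw [sum_mul_gapMix]
    have h0 : mnlRev gapRev (gapWeight M) {0} = 1 / 2 := by
      norm_num [mnlRev, gapRev, gapWeight]
    have hU := mnlRev_gap_nonneg hM univ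
    have hR := mul_le_mul_of_nonneg_left (mnlRev_le_of_covering hM S hS) hM.le
    have hq : M * (1 / (2 + 4 * M)) ≤ 1 / 4 := by
      rw [mul_one_div, div_le_div_iff₀ (by linarith) (by norm_num)]
      linarith
    rw [h0]
    linarith
end

section
/- Let {S_j*}_{j∈M} be an optimal solution to (m-DAOC) with S_j* ≠ ∅ for every j, and set γ_j = θ_j R_j(S_j*)/∑_{i∈S_j*} v_{ij}. Let α ≥ 0 and suppose the profile {Ŝ_j}_{j∈M} is feasible and satisfies ∑_{j∈M} γ_j ∑_{i∈Ŝ_j} v_{ij} ≤ α·∑_{j∈M} γ_j ∑_{i∈S_j} v_{ij} for every feasible profile {S_j}_{j∈M} (i.e., {Ŝ_j} is an α-approximation to the weighted set cover problem with weights γ_j v_{ij}). For each j let S_j ∈ argmax{R_j(S) : Ŝ_j ⊆ S ⊆ N} be an optimal expansion of Ŝ_j. Then ∑_{j∈M} θ_j R_j(S_j) ≥ (1/(α+1))·∑_{j∈M} θ_j R_j(S_j*), i.e., {S_j} is a 1/(α+1)-approximation to (m-DAOC). -/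
/-!
Write `Vⱼ = ∑_{i ∈ Sstar j} v i j`, `V̂ⱼ = ∑_{i ∈ Shat j} v i j`, `wⱼ = θⱼ Rⱼ(Sstar j)` and
`xⱼ = V̂ⱼ / Vⱼ`. The set `Sstar j ∪ Shat j` is an admissible expansion of `Shat j`; it earns at
least the revenue numerator of `Sstar j`, and its weight is at most `Vⱼ + V̂ⱼ`, so
`Rⱼ(Ssol j) ≥ Rⱼ(Sstar j) / (1 + xⱼ)` (`segRev_union_ge`). As `γⱼ Vⱼ = wⱼ` and `γⱼ V̂ⱼ = wⱼ xⱼ`, the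
covering hypothesis tested at `Sstar` reads `∑ wⱼ xⱼ ≤ α ∑ wⱼ`. Convexity of `x ↦ 1 / (1 + x)`, in
the form of its tangent line at `α` (`tangent_le`), then gives
`∑ wⱼ / (1 + xⱼ) ≥ (∑ wⱼ) / (1 + α)`.
-/

open Finset

/-- Expected revenue from customer segment `j` of an assortment under the MNL model. -/
noncomputable def segRev {n m : ℕ} (r : Fin n → ℝ) (v : Fin n → Fin m → ℝ) (j : Fin m)
    (S : Finset (Fin n)) : ℝ :=
  (∑ i ∈ S, r i * v i j) / (1 + ∑ i ∈ S, v i j)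

/-- Feasibility of a profile of assortments for (m-DAOC). -/
def mFeasible {n m K : ℕ} (θ : Fin m → ℝ) (C : Fin K → Finset (Fin n)) (ℓ : Fin K → ℕ)
    (S : Fin m → Finset (Fin n)) : Prop :=
  ∀ k, (ℓ k : ℝ) ≤ ∑ j, θ j * ((S j ∩ C k).card : ℝ)

lemma segRev_nonneg {n m : ℕ} {r : Fin n → ℝ} (hr : ∀ i, 0 ≤ r i)
    {v : Fin n → Fin m → ℝ} (hv : ∀ i j, 0 < v i j) (j : Fin m) (S : Finset (Fin n)) :
    0 ≤ segRev r v j S := by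
  have h1 : 0 ≤ ∑ i ∈ S, r i * v i j := sum_nonneg fun i _ => mul_nonneg (hr i) (hv i j).le
  have h2 : 0 ≤ ∑ i ∈ S, v i j := sum_nonneg fun i _ => (hv i j).le
  unfold segRev
  positivity

/-- Adding products `T` to a nonempty assortment `S` shrinks its revenue by a factor of at most
`1 + V(T) / V(S)`, where `V` is the total preference weight. -/
lemma segRev_union_ge {n m : ℕ} {r : Fin n → ℝ} (hr : ∀ i, 0 ≤ r i)
    {v : Fin n → Fin m → ℝ} (hv : ∀ i j, 0 < v i j) (j : Fin m) (S T : Finset (Fin n))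
    (hS : S ≠ ∅) :
    segRev r v j S * (1 / (1 + (∑ i ∈ T, v i j) / ∑ i ∈ S, v i j)) ≤ segRev r v j (S ∪ T) := by
  have hW : 0 ≤ ∑ i ∈ S, r i * v i j := sum_nonneg fun i _ => mul_nonneg (hr i) (hv i j).le
  have hWU : ∑ i ∈ S, r i * v i j ≤ ∑ i ∈ S ∪ T, r i * v i j :=
    sum_le_sum_of_subset_of_nonneg subset_union_left
      fun i _ _ => mul_nonneg (hr i) (hv i j).le
  have hV : 0 < ∑ i ∈ S, v i j :=
    sum_pos (fun i _ => hv i j) (nonempty_iff_ne_empty.mpr hS)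
  have hT : 0 ≤ ∑ i ∈ T, v i j := sum_nonneg fun i _ => (hv i j).le
  have hU : 0 ≤ ∑ i ∈ S ∪ T, v i j := sum_nonneg fun i _ => (hv i j).le
  have hVU : ∑ i ∈ S ∪ T, v i j ≤ ∑ i ∈ S, v i j + ∑ i ∈ T, v i j := by
    have h1 := sum_union_inter (s₁ := S) (s₂ := T) (f := fun i => v i j)
    have h2 : 0 ≤ ∑ i ∈ S ∩ T, v i j := sum_nonneg fun i _ => (hv i j).le
    linarith
  unfold segRev
  generalize ∑ i ∈ S, r i * v i j = W at *
  generalize ∑ i ∈ S ∪ T, r i * v i j = W' at *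
  generalize ∑ i ∈ S, v i j = V at *
  generalize ∑ i ∈ T, v i j = X at *
  generalize ∑ i ∈ S ∪ T, v i j = U at *
  have hden : 1 + U ≤ (1 + V) * (1 + X / V) := by
    have h : (1 + V) * (1 + X / V) = 1 + V + X + X / V := by field_simp; ring
    have : 0 ≤ X / V := by positivity
    linarith
  calc W / (1 + V) * (1 / (1 + X / V)) = W / ((1 + V) * (1 + X / V)) := by
        rw [div_mul_div_comm, mul_one]
    _ ≤ W / (1 + U) := by gcongr
    _ ≤ W' / (1 + U) := by gcongr

/-- The convex function `x ↦ 1 / (1 + x)` lies above its tangent line at `α`. -/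
lemma tangent_le {α x : ℝ} (hα : 0 ≤ α) (hx : 0 ≤ x) :
    1 / (α + 1) + (α - x) / (α + 1) ^ 2 ≤ 1 / (1 + x) := by
  have h : 1 / (1 + x) - (1 / (α + 1) + (α - x) / (α + 1) ^ 2)
      = (x - α) ^ 2 / ((1 + x) * (α + 1) ^ 2) := by
    field_simp
    ring
  have : 0 ≤ (x - α) ^ 2 / ((1 + x) * (α + 1) ^ 2) := by positivity
  linarith

theorem stmt7 {n m K : ℕ} (r : Fin n → ℝ) (hr : ∀ i, 0 ≤ r i)
    (v : Fin n → Fin m → ℝ) (hv : ∀ i j, 0 < v i j)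
    (θ : Fin m → ℝ) (hθ : ∀ j, 0 < θ j) (hθ1 : ∑ j, θ j = 1)
    (C : Fin K → Finset (Fin n)) (ℓ : Fin K → ℕ)
    (Sstar : Fin m → Finset (Fin n))
    (hSstarFeas : mFeasible θ C ℓ Sstar)
    (hSstarOpt : ∀ S, mFeasible θ C ℓ S →
      ∑ j, θ j * segRev r v j (S j) ≤ ∑ j, θ j * segRev r v j (Sstar j))
    (hSstarNe : ∀ j, Sstar j ≠ ∅)
    (γ : Fin m → ℝ)
    (hγ : ∀ j, γ j = θ j * segRev r v j (Sstar j) / ∑ i ∈ Sstar j, v i j)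
    (α : ℝ) (hα : 0 ≤ α)
    (Shat : Fin m → Finset (Fin n)) (hShatFeas : mFeasible θ C ℓ Shat)
    (hShatApprox : ∀ S, mFeasible θ C ℓ S →
      ∑ j, γ j * ∑ i ∈ Shat j, v i j ≤ α * ∑ j, γ j * ∑ i ∈ S j, v i j)
    (Ssol : Fin m → Finset (Fin n))
    (hSsol : ∀ j, Shat j ⊆ Ssol j ∧
      ∀ S' : Finset (Fin n), Shat j ⊆ S' → segRev r v j S' ≤ segRev r v j (Ssol j)) :
    (1 / (α + 1)) * ∑ j, θ j * segRev r v j (Sstar j)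
      ≤ ∑ j, θ j * segRev r v j (Ssol j) := by
  have hV : ∀ j, 0 < ∑ i ∈ Sstar j, v i j := fun j =>
    sum_pos (fun i _ => hv i j) (nonempty_iff_ne_empty.mpr (hSstarNe j))
  have hx : ∀ j, 0 ≤ (∑ i ∈ Shat j, v i j) / ∑ i ∈ Sstar j, v i j := fun j =>
    div_nonneg (sum_nonneg fun i _ => (hv i j).le) (hV j).le
  have hw : ∀ j, 0 ≤ θ j * segRev r v j (Sstar j) := fun j =>
    mul_nonneg (hθ j).le (segRev_nonneg hr hv j _)
  have hcover : ∑ j, θ j * segRev r v j (Sstar j) *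
        ((∑ i ∈ Shat j, v i j) / ∑ i ∈ Sstar j, v i j)
      ≤ α * ∑ j, θ j * segRev r v j (Sstar j) := by
    have h := hShatApprox Sstar hSstarFeas
    have hhat : ∀ j, γ j * ∑ i ∈ Shat j, v i j = θ j * segRev r v j (Sstar j) *
        ((∑ i ∈ Shat j, v i j) / ∑ i ∈ Sstar j, v i j) := fun j => by
      rw [hγ, div_mul_eq_mul_div, mul_div_assoc]
    have hstar : ∀ j, γ j * ∑ i ∈ Sstar j, v i j = θ j * segRev r v j (Sstar j) := fun j => by
      rw [hγ, div_mul_cancel₀ _ (hV j).ne']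
    simpa only [hhat, hstar] using h
  have hterm : ∀ j, θ j * segRev r v j (Sstar j) * (1 / (α + 1) +
        (α - (∑ i ∈ Shat j, v i j) / ∑ i ∈ Sstar j, v i j) / (α + 1) ^ 2)
      ≤ θ j * segRev r v j (Ssol j) := by
    intro j
    refine (mul_le_mul_of_nonneg_left (tangent_le hα (hx j)) (hw j)).trans ?_
    rw [mul_assoc]
    exact mul_le_mul_of_nonneg_left
      ((segRev_union_ge hr hv j _ _ (hSstarNe j)).trans ((hSsol j).2 _ subset_union_right))
      (hθ j).le
  refine le_trans ?_ (sum_le_sum fun j _ => hterm j)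
  have hsplit : ∑ j, θ j * segRev r v j (Sstar j) * (1 / (α + 1) +
        (α - (∑ i ∈ Shat j, v i j) / ∑ i ∈ Sstar j, v i j) / (α + 1) ^ 2)
      = 1 / (α + 1) * ∑ j, θ j * segRev r v j (Sstar j) +
        (α * ∑ j, θ j * segRev r v j (Sstar j) - ∑ j, θ j * segRev r v j (Sstar j) *
          ((∑ i ∈ Shat j, v i j) / ∑ i ∈ Sstar j, v i j)) / (α + 1) ^ 2 := by
    rw [mul_sum, mul_sum, ← sum_sub_distrib, sum_div, ← sum_add_distrib]
    exact sum_congr rfl fun j _ => by ring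
  rw [hsplit]
  have := div_nonneg (sub_nonneg.mpr hcover) (sq_nonneg (α + 1))
  linarith
end

section
/- Assume K ≥ 1 and ε > 0, and let log denote the natural logarithm. Let S* be an optimal solution of (DAOC-Cardinality) with S* ≠ ∅. Suppose γ̂ > 0 satisfies ∑_{i∈S*} v_i ≤ γ̂·|S*| ≤ (1+ε)·∑_{i∈S*} v_i, and suppose Ŝ ⊆ N satisfies the covering constraints with ∑_{i∈Ŝ} (v_i + γ̂) ≤ (log K + 1)·∑_{i∈S} (v_i + γ̂) for every S ⊆ N satisfying the covering constraints. Then |Ŝ| ≤ (2·log K + 2)·L and max{R(S) : Ŝ ⊆ S ⊆ N, |S ∖ Ŝ| ≤ L} ≥ R(S*)/((2+ε)·log K + 3 + ε). -/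
/-!
Write `V` for the total weight of a set. Applying the greedy guarantee to `Sstar` itself gives
`V Shat + γ |Shat| ≤ (log K + 1) (V Sstar + γ |Sstar|)`. Bounding `V Sstar` by `γ |Sstar|` and
dividing by `γ` yields the cardinality bound; bounding `γ |Sstar|` by `(1 + ε) V Sstar` instead
yields `V Shat ≤ (2 + ε) (log K + 1) V Sstar`. The assortment `Shat ∪ Sstar` collects at least the
numerator of the revenue of `Sstar`, and the latter bound controls the growth of its denominator.
-/

open Finset

theorem stmt12 {n K : ℕ} (hK : 1 ≤ K) (ε : ℝ) (hε : 0 < ε)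
    (r v : Fin n → ℝ) (hr : ∀ i, 0 ≤ r i) (hv : ∀ i, 0 < v i)
    (C : Fin K → Finset (Fin n)) (ℓ : Fin K → ℕ) (hℓ : ∀ k, ℓ k ≤ (C k).card)
    (L : ℕ)
    -- S* is an optimal solution of (DAOC-Cardinality), nonempty
    (Sstar : Finset (Fin n)) (hSne : Sstar ≠ ∅)
    (hScov : ∀ k, ℓ k ≤ (Sstar ∩ C k).card) (hScard : Sstar.card ≤ L)
    (hSopt : ∀ S : Finset (Fin n), (∀ k, ℓ k ≤ (S ∩ C k).card) → S.card ≤ L →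
      mnlRev r v S ≤ mnlRev r v Sstar)
    -- the guessed penalty parameter γ̂
    (γ : ℝ) (hγ : 0 < γ)
    (hγ1 : ∑ i ∈ Sstar, v i ≤ γ * Sstar.card)
    (hγ2 : γ * Sstar.card ≤ (1 + ε) * ∑ i ∈ Sstar, v i)
    -- the greedy solution Ŝ of the penalized weighted cover problem
    (Shat : Finset (Fin n)) (hShatCov : ∀ k, ℓ k ≤ (Shat ∩ C k).card)
    (hShatGreedy : ∀ S : Finset (Fin n), (∀ k, ℓ k ≤ (S ∩ C k).card) →
      ∑ i ∈ Shat, (v i + γ) ≤ (Real.log K + 1) * ∑ i ∈ S, (v i + γ)) :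
    (Shat.card : ℝ) ≤ (2 * Real.log K + 2) * L ∧
    ∃ S : Finset (Fin n), Shat ⊆ S ∧ (S \ Shat).card ≤ L ∧
      mnlRev r v Sstar / ((2 + ε) * Real.log K + 3 + ε) ≤ mnlRev r v S := by
  have hA : 0 ≤ Real.log K := Real.log_nonneg (by exact_mod_cast hK)
  have hG := hShatGreedy Sstar hScov
  simp only [sum_add_distrib, sum_const, nsmul_eq_mul] at hG
  have hL : (Sstar.card : ℝ) ≤ L := by exact_mod_cast hScard
  have hVs : 0 ≤ ∑ i ∈ Sstar, v i := sum_nonneg fun i _ => (hv i).le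
  have hVh : 0 ≤ ∑ i ∈ Shat, v i := sum_nonneg fun i _ => (hv i).le
  have hrv : ∀ i, 0 ≤ r i * v i := fun i => mul_nonneg (hr i) (hv i).le
  constructor
  · have h1 := mul_le_mul_of_nonneg_left hγ1 (by linarith : 0 ≤ Real.log K + 1)
    have h2 : γ * (Shat.card : ℝ) ≤ γ * ((2 * Real.log K + 2) * Sstar.card) := by linarith
    exact (le_of_mul_le_mul_left h2 hγ).trans
      (mul_le_mul_of_nonneg_left hL (by linarith))
  · refine ⟨Shat ∪ Sstar, subset_union_left, ?_, ?_⟩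
    · rw [union_sdiff_left]
      exact (card_le_card sdiff_subset).trans hScard
    · have hnum : ∑ i ∈ Sstar, r i * v i ≤ ∑ i ∈ Shat ∪ Sstar, r i * v i :=
        sum_le_sum_of_subset_of_nonneg subset_union_right fun i _ _ => hrv i
      have hden : ∑ i ∈ Shat ∪ Sstar, v i ≤ ∑ i ∈ Shat, v i + ∑ i ∈ Sstar, v i := by
        rw [← sum_union_inter]
        exact le_add_of_nonneg_right (sum_nonneg fun i _ => (hv i).le)
      have hV : 0 ≤ ∑ i ∈ Shat ∪ Sstar, v i := sum_nonneg fun i _ => (hv i).le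
      have h1 := mul_le_mul_of_nonneg_left hγ2 (by linarith : 0 ≤ Real.log K + 1)
      have h2 : 0 ≤ γ * (Shat.card : ℝ) := by positivity
      have h3 : 0 ≤ ε * Real.log K := by positivity
      unfold mnlRev
      rw [div_div]
      refine div_le_div₀ (sum_nonneg fun i _ => hrv i) hnum (by linarith) ?_
      linarith
end

section
/- Assume ℓ_k ≤ T·|C_k| for all k, so both the customization problem and the relaxed problem are feasible. Let q* be an optimal solution to the relaxed problem whose support is contained in a nested family S^{(1)} ⊋ S^{(2)} ⊋ ⋯ ⊋ S^{(n₀)} of subsets of N (so ∑_{i=1}^{n₀} q*(S^{(i)}) = 1). Define τ_0 = 0, τ_i = ⌈T·∑_{j=1}^i q*(S^{(j)})⌉ for i = 1,…,n₀, and S̃_t = S^{(i)} for τ_{i−1} < t ≤ τ_i. Then {S̃_t}_{t=1}^T is feasible for the customization problem, i.e., ∑_{t=1}^T |S̃_t ∩ C_k| ≥ ℓ_k for all k, and ∑_{t=1}^T R(S̃_t) ≥ ∑_{t=1}^T R(S_t) − max_{i∈N} r_i for every feasible {S_t}_{t=1}^T of the customization problem. -/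
/-!
Put the interval `(0, T]` in two partitions: the unit intervals `(t, t + 1]`, one for each customer,
and the intervals `(T * Q i, T * Q (i + 1)]` of length `T * q (F i)`, where `Q i` is the sum of
`q (F j)` over `j < i`. With `w t i` the length of the overlap of the `t`-th interval of the first
kind and the `i`-th of the second (`exists_overlap`), `T * ∑ S, g S * q S = ∑ t, ∑ i, w t i * g (F i)`
for every `g`, so customer `t` faces a mixture of the sets `F i` with weights `w t i`.
The rounded assortment `St t` is the set whose interval contains the points just to the right of `t`.
Hence every set in the mixture of customer `t` is contained in `St t` and contains `St (t + 1)`.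

The first inclusion gives feasibility. For revenue, optimality of `q` implies that `R` does not
increase when passing from a set in the support to a larger set, since otherwise mass could be moved
to the larger set (`mnlRev_le_of_subset`). So the mixture of customer `t` earns at most
`R (St (t + 1))`, and the mixture of the last customer at most `max r`; summing loses at
most `max r`. The relaxed optimum bounds any customized solution, as the empirical
distribution of the latter is feasible for the relaxed problem (`sum_le_relaxed`).
-/

open Finset

/-- Feasibility for the relaxed problem (with thresholds ℓ_k / T). -/
def relFeasible {n K : ℕ} (T : ℕ) (C : Fin K → Finset (Fin n)) (ℓ : Fin K → ℕ)
    (q : Finset (Fin n) → ℝ) : Prop :=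
  (∀ S, 0 ≤ q S) ∧ (∑ S : Finset (Fin n), q S = 1) ∧
    ∀ k, (ℓ k : ℝ) / T ≤ ∑ S : Finset (Fin n), ((S ∩ C k).card : ℝ) * q S

/-- Overlap of the unit partition of `(0, T]` with the partition into intervals of length `T * p i`.
`w t i` is the overlap length and `idx t` the interval of the second kind containing the points just
to the right of `t`. -/
lemma exists_overlap {m T : ℕ} (hT : 1 ≤ T) (p : Fin m → ℝ) (hp : ∀ i, 0 ≤ p i)
    (hsum : ∑ i, p i = 1) :
    ∃ (idx : Fin T → Fin m) (w : Fin T → Fin m → ℝ),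
      (∀ t : Fin T, (T : ℝ) * ∑ j ∈ Finset.Iio (idx t), p j ≤ (t : ℕ)) ∧
      (∀ t : Fin T, ((t : ℕ) : ℝ) < (T : ℝ) * ∑ j ∈ Finset.Iic (idx t), p j) ∧
      (∀ t i, 0 ≤ w t i) ∧ (∀ t, ∑ i, w t i = 1) ∧ (∀ i, ∑ t, w t i = T * p i) ∧
      (∀ t i, 0 < w t i → idx t ≤ i) ∧
      (∀ t t' : Fin T, (t' : ℕ) = t + 1 → ∀ i, 0 < w t i → i ≤ idx t') := by
  have hTpos : (0 : ℝ) < T := by exact_mod_cast hT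
  obtain ⟨Q, hQ⟩ : ∃ Q : ℕ → ℝ, ∀ k, Q k = T * ∑ j : Fin m with j.val < k, p j := ⟨_, fun _ => rfl⟩
  have hIio : ∀ i : Fin m, (T : ℝ) * ∑ j ∈ Finset.Iio i, p j = Q i := by
    intro i
    rw [hQ]; congr 2; ext j; simp
  have hIic : ∀ i : Fin m, (T : ℝ) * ∑ j ∈ Finset.Iic i, p j = Q (i + 1) := by
    intro i
    rw [hQ]; congr 2; ext j; simp
  have hQ0 : Q 0 = 0 := by simp [hQ]
  have hQm : Q m = T := by simp [hQ, hsum]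
  have hQmono : Monotone Q := by
    intro a b hab
    rw [hQ, hQ]
    refine mul_le_mul_of_nonneg_left (Finset.sum_le_sum_of_subset_of_nonneg ?_ ?_) hTpos.le
    · intro j hj
      simp only [Finset.mem_filter, Finset.mem_univ, true_and] at hj ⊢
      omega
    · intro j _ _; exact hp j
  have hQstep : ∀ i : Fin m, Q (i + 1) - Q i = T * p i := by
    intro i
    rw [← hIio, ← hIic, ← Finset.Iio_insert i, Finset.sum_insert (by simp)]
    ring
  have hidx : ∀ t : Fin T, ∃ i : Fin m, Q i ≤ (t : ℕ) ∧ ((t : ℕ) : ℝ) < Q (i + 1) := by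
    intro t
    have hex : ∃ k, ((t : ℕ) : ℝ) < Q k := ⟨m, by rw [hQm]; exact_mod_cast t.2⟩
    classical
    have hlt := Nat.find_spec hex
    have hle : Nat.find hex ≤ m := Nat.find_min' hex (by rw [hQm]; exact_mod_cast t.2)
    have hne : Nat.find hex ≠ 0 := by
      intro h0
      rw [h0, hQ0] at hlt
      exact absurd hlt (not_lt.2 (Nat.cast_nonneg _))
    refine ⟨⟨Nat.find hex - 1, by omega⟩, ?_, ?_⟩
    · exact not_lt.1 (Nat.find_min hex (by simp only; omega))
    · simpa [Nat.sub_add_cancel (Nat.one_le_iff_ne_zero.2 hne)] using hlt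
  choose idx h1 h2 using hidx
  -- the length of `(t, t + 1] ∩ (0, x]`, for `x ≥ 0`
  obtain ⟨c, hc⟩ : ∃ c : ℕ → ℝ → ℝ, ∀ t x, c t x = min x ((t + 1 : ℕ) : ℝ) - min x (t : ℝ) :=
    ⟨_, fun _ _ => rfl⟩
  have hpos : ∀ (t : ℕ) (a b : ℝ), a ≤ b → 0 < c t b - c t a → (t : ℝ) < b ∧ a < t + 1 := by
    intro t a b hab h
    rw [hc, hc] at h
    push_cast at h
    constructor
    · by_contra hb
      rw [min_eq_left, min_eq_left, min_eq_left, min_eq_left] at h <;> linarith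
    · by_contra hb
      rw [min_eq_right, min_eq_right, min_eq_right, min_eq_right] at h <;> linarith
  refine ⟨idx, fun t i => c t (Q (i + 1)) - c t (Q i), ?_, ?_, ?_, ?_, ?_, ?_, ?_⟩
  · intro t; rw [hIio]; exact h1 t
  · intro t; rw [hIic]; exact h2 t
  · intro t i
    have := hQmono (Nat.le_succ (i : ℕ))
    simp only [Nat.succ_eq_add_one] at this
    simp only [hc, Nat.cast_add, Nat.cast_one]
    rcases le_total (Q (i + 1)) t with h | h <;> rcases le_total (Q (i + 1)) (t + 1) with h' | h' <;>
    rcases le_total (Q i) t with h'' | h'' <;> rcases le_total (Q i) (t + 1) with h''' | h''' <;>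
    simp only [h, h', h'', h''', min_eq_left, min_eq_right] <;> linarith
  · intro t
    rw [Fin.sum_univ_eq_sum_range (fun i => c t (Q (i + 1)) - c t (Q i)) m,
      Finset.sum_range_sub (fun i => c t (Q i)), hQ0, hQm, hc, hc]
    have h3 : ((t : ℕ) : ℝ) + 1 ≤ T := by exact_mod_cast t.2
    have h4 : (0 : ℝ) ≤ (t : ℕ) := Nat.cast_nonneg _
    push_cast
    rw [min_eq_right h3, min_eq_right (by linarith), min_eq_left (by linarith), min_eq_left h4]
    ring
  · intro i
    have key : ∀ x : ℝ, 0 ≤ x → x ≤ T → ∑ t : Fin T, c t x = x := by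
      intro x hx hxT
      simp only [hc]
      rw [Fin.sum_univ_eq_sum_range (fun t => min x ((t + 1 : ℕ) : ℝ) - min x (t : ℝ)) T,
        Finset.sum_range_sub (fun t : ℕ => min x (t : ℝ))]
      simp [hx, hxT]
    have hb : ∀ k, k ≤ m → 0 ≤ Q k ∧ Q k ≤ T := fun k hk =>
      ⟨hQ0 ▸ hQmono (Nat.zero_le k), hQm ▸ hQmono hk⟩
    rw [Finset.sum_sub_distrib, key _ (hb _ i.2).1 (hb _ i.2).2, key _ (hb _ i.2.le).1 (hb _ i.2.le).2,
      hQstep]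
  · intro t i hw
    have h := (hpos t _ _ (hQmono (Nat.le_succ (i : ℕ))) hw).1
    have h3 := hQmono.reflect_lt (lt_of_le_of_lt (h1 t) h)
    exact Fin.le_def.2 (Nat.lt_succ_iff.1 h3)
  · intro t t' htt i hw
    have h := (hpos t _ _ (hQmono (Nat.le_succ (i : ℕ))) hw).2
    have h4 := h2 t'
    rw [htt] at h4
    push_cast at h4
    exact Fin.le_def.2 (Nat.lt_succ_iff.1 (hQmono.reflect_lt (h.trans h4)))

lemma mnlRev_nonneg {n : ℕ} (r v : Fin n → ℝ) (hr : ∀ i, 0 ≤ r i) (hv : ∀ i, 0 < v i)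
    (S : Finset (Fin n)) : 0 ≤ mnlRev r v S :=
  div_nonneg (Finset.sum_nonneg fun i _ => mul_nonneg (hr i) (hv i).le)
    (add_nonneg zero_le_one (Finset.sum_nonneg fun i _ => (hv i).le))

lemma mnlRev_le_iSup {n : ℕ} (r v : Fin n → ℝ) (hr : ∀ i, 0 ≤ r i) (hv : ∀ i, 0 < v i)
    (S : Finset (Fin n)) : mnlRev r v S ≤ ⨆ i, r i := by
  have h0 : 0 ≤ ⨆ i, r i := Real.iSup_nonneg hr
  have hV : 0 ≤ ∑ i ∈ S, v i := Finset.sum_nonneg fun i _ => (hv i).le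
  rw [mnlRev, div_le_iff₀ (by linarith)]
  have : ∑ i ∈ S, r i * v i ≤ (⨆ i, r i) * ∑ i ∈ S, v i := by
    rw [Finset.mul_sum]
    exact Finset.sum_le_sum fun i _ =>
      mul_le_mul_of_nonneg_right (le_ciSup (Set.finite_range r).bddAbove i) (hv i).le
  linarith

/-- Enlarging a set of positive mass cannot increase revenue: moving the mass of `B` to a larger set
`A` keeps the relaxed constraints satisfied, so it cannot improve on the optimum. -/
lemma mnlRev_le_of_subset {n K T : ℕ} (r v : Fin n → ℝ) (C : Fin K → Finset (Fin n))
    (ℓ : Fin K → ℕ) (q : Finset (Fin n) → ℝ) (hq : relFeasible T C ℓ q)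
    (hqOpt : ∀ q' : Finset (Fin n) → ℝ, relFeasible T C ℓ q' →
      ∑ S : Finset (Fin n), mnlRev r v S * q' S ≤ ∑ S : Finset (Fin n), mnlRev r v S * q S)
    {A B : Finset (Fin n)} (hAB : B ⊆ A) (hB : 0 < q B) : mnlRev r v A ≤ mnlRev r v B := by
  obtain ⟨hq0, hq1, hqC⟩ := hq
  obtain ⟨q', hq'⟩ : ∃ q' : Finset (Fin n) → ℝ, ∀ S, q' S =
      q S + (if S = A then q B else 0) - (if S = B then q B else 0) := ⟨_, fun _ => rfl⟩
  have hsum : ∀ g : Finset (Fin n) → ℝ,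
      ∑ S, g S * q' S = ∑ S, g S * q S + (g A - g B) * q B := by
    intro g
    simp only [hq', mul_sub, mul_add, Finset.sum_sub_distrib, Finset.sum_add_distrib, mul_ite,
      mul_zero, Finset.sum_ite_eq', Finset.mem_univ, if_true]
    ring
  have hfe : relFeasible T C ℓ q' := by
    refine ⟨fun S => ?_, ?_, fun k => ?_⟩
    · rw [hq']
      have := hq0 S
      by_cases hSB : S = B
      · subst hSB
        split_ifs <;> simp [hB.le]
      · split_ifs <;> linarith
    · have := hsum (fun _ => 1)
      simpa [hq1] using this
    · rw [hsum (fun S => ((S ∩ C k).card : ℝ))]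
      have h1 : ((B ∩ C k).card : ℝ) ≤ ((A ∩ C k).card : ℝ) := by
        exact_mod_cast Finset.card_le_card (Finset.inter_subset_inter_right hAB)
      have := mul_nonneg (sub_nonneg.2 h1) hB.le
      linarith [hqC k]
  have h := hqOpt q' hfe
  rw [hsum] at h
  by_contra hlt
  have := mul_pos (sub_pos.2 (not_le.1 hlt)) hB
  linarith

/-- `T` times the relaxed optimum bounds every customized solution, by comparison with the empirical
distribution of its assortments. -/
lemma sum_le_relaxed {n K T : ℕ} (hT : 1 ≤ T) (r v : Fin n → ℝ) (C : Fin K → Finset (Fin n))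
    (ℓ : Fin K → ℕ) (q : Finset (Fin n) → ℝ)
    (hqOpt : ∀ q' : Finset (Fin n) → ℝ, relFeasible T C ℓ q' →
      ∑ S : Finset (Fin n), mnlRev r v S * q' S ≤ ∑ S : Finset (Fin n), mnlRev r v S * q S)
    (S : Fin T → Finset (Fin n)) (hS : ∀ k, ℓ k ≤ ∑ t : Fin T, ((S t ∩ C k).card)) :
    ∑ t, mnlRev r v (S t) ≤ T * ∑ A : Finset (Fin n), mnlRev r v A * q A := by
  have hTpos : (0 : ℝ) < T := by exact_mod_cast hT
  obtain ⟨q', hq'⟩ : ∃ q' : Finset (Fin n) → ℝ, ∀ A, q' A =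
      (∑ t, if A = S t then (1 : ℝ) else 0) / T := ⟨_, fun _ => rfl⟩
  have hsum : ∀ g : Finset (Fin n) → ℝ, ∑ A, g A * q' A = (∑ t, g (S t)) / T := by
    intro g
    simp only [hq', mul_div_assoc', ← Finset.sum_div, Finset.mul_sum]
    rw [Finset.sum_comm]
    simp
  have h := hqOpt q' ⟨fun A => ?_, ?_, fun k => ?_⟩
  · rw [hsum, div_le_iff₀ hTpos] at h
    linarith
  · rw [hq']
    exact div_nonneg (Finset.sum_nonneg fun t _ => by split_ifs <;> norm_num) hTpos.le
  · have := hsum (fun _ => 1)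
    simpa [hTpos.ne'] using this
  · rw [hsum (fun A => ((A ∩ C k).card : ℝ))]
    gcongr
    exact_mod_cast hS k

theorem stmt13 {n K T : ℕ} (hn : 0 < n) (hT : 1 ≤ T)
    (r v : Fin n → ℝ) (hr : ∀ i, 0 ≤ r i) (hv : ∀ i, 0 < v i)
    (C : Fin K → Finset (Fin n)) (ℓ : Fin K → ℕ)
    (hfeas : ∀ k, ℓ k ≤ T * (C k).card)
    -- q* is an optimal solution of the relaxed problem
    (q : Finset (Fin n) → ℝ) (hq : relFeasible T C ℓ q)
    (hqOpt : ∀ q' : Finset (Fin n) → ℝ, relFeasible T C ℓ q' →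
      ∑ S : Finset (Fin n), mnlRev r v S * q' S ≤ ∑ S : Finset (Fin n), mnlRev r v S * q S)
    -- whose support is contained in a strictly nested family S^{(1)} ⊋ ⋯ ⊋ S^{(n₀)}
    (n₀ : ℕ) (F : Fin n₀ → Finset (Fin n))
    (hFnest : ∀ i j : Fin n₀, i < j → F j ⊂ F i)
    (hsupp : ∀ S : Finset (Fin n), q S ≠ 0 → ∃ i : Fin n₀, S = F i)
    -- the rounded solution: S̃_t = S^{(i)} for τ_{i-1} < t ≤ τ_i, τ_i = ⌈T ∑_{j≤i} q(S^{(j)})⌉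
    (St : Fin T → Finset (Fin n))
    (hSt : ∀ (t : Fin T) (i : Fin n₀),
      ⌈(T : ℝ) * ∑ j ∈ Finset.Iio i, q (F j)⌉₊ < (t : ℕ) + 1 →
      (t : ℕ) + 1 ≤ ⌈(T : ℝ) * ∑ j ∈ Finset.Iic i, q (F j)⌉₊ →
      St t = F i) :
    (∀ k, ℓ k ≤ ∑ t : Fin T, ((St t ∩ C k).card)) ∧
    ∀ S : Fin T → Finset (Fin n), (∀ k, ℓ k ≤ ∑ t : Fin T, ((S t ∩ C k).card)) →
      (∑ t : Fin T, mnlRev r v (S t)) - (⨆ i : Fin n, r i)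
        ≤ ∑ t : Fin T, mnlRev r v (St t) := by
  obtain ⟨hq0, hq1, hqC⟩ := id hq
  have hTpos : (0 : ℝ) < T := by exact_mod_cast hT
  have hFinj : Function.Injective F := by
    intro i j hij
    by_contra hne
    rcases lt_or_gt_of_ne hne with h | h
    · exact (hFnest i j h).ne hij.symm
    · exact (hFnest j i h).ne hij
  have hFanti : ∀ i j, i ≤ j → F j ⊆ F i := by
    intro i j hij
    rcases hij.eq_or_lt with h | h
    · rw [h]
    · exact (hFnest i j h).subset
  have hsumF : ∀ g : Finset (Fin n) → ℝ, ∑ S, g S * q S = ∑ i, g (F i) * q (F i) := by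
    intro g
    rw [← Finset.sum_image (s := Finset.univ) (f := fun S => g S * q S) (g := F)
      (fun i _ j _ h => hFinj h)]
    symm
    refine Finset.sum_subset (Finset.subset_univ _) fun S _ hS => ?_
    by_contra hne
    obtain ⟨i, rfl⟩ := hsupp S (right_ne_zero_of_mul hne)
    exact hS (Finset.mem_image_of_mem F (Finset.mem_univ i))
  have hqF : ∑ i, q (F i) = 1 := by
    have := hsumF (fun _ => 1)
    simp only [one_mul] at this
    rw [← this, hq1]
  obtain ⟨idx, w, hlo, hhi, hw0, hw1, hwT, hwle, hwge⟩ :=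
    exists_overlap hT (fun i => q (F i)) (fun i => hq0 _) hqF
  have hStF : ∀ t, St t = F (idx t) := fun t =>
    hSt t (idx t) (Nat.lt_succ_of_le (Nat.ceil_le.2 (hlo t))) (Nat.lt_ceil.2 (hhi t))
  have hpos : ∀ t, 0 < q (F (idx t)) := by
    intro t
    have h := (hlo t).trans_lt (hhi t)
    rw [← Finset.Iio_insert (idx t), Finset.sum_insert (by simp)] at h
    linarith [lt_of_mul_lt_mul_left h hTpos.le]
  have hmix : ∀ g : Finset (Fin n) → ℝ, (T : ℝ) * ∑ S, g S * q S = ∑ t, ∑ i, w t i * g (F i) := by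
    intro g
    rw [hsumF, Finset.sum_comm, Finset.mul_sum]
    refine Finset.sum_congr rfl fun i _ => ?_
    rw [← Finset.sum_mul, hwT]
    ring
  have hmix_le : ∀ (g : Finset (Fin n) → ℝ) (t : Fin T) (b : ℝ),
      (∀ i, 0 < w t i → g (F i) ≤ b) → ∑ i, w t i * g (F i) ≤ b := by
    intro g t b h
    calc ∑ i, w t i * g (F i) ≤ ∑ i, w t i * b := by
          refine Finset.sum_le_sum fun i _ => ?_
          rcases (hw0 t i).eq_or_lt with h0 | h0
          · rw [← h0]; simp
          · exact mul_le_mul_of_nonneg_left (h i h0) h0.le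
      _ = b := by rw [← Finset.sum_mul, hw1, one_mul]
  refine ⟨fun k => ?_, fun S hS => ?_⟩
  · have h1 : (ℓ k : ℝ) ≤ T * ∑ S : Finset (Fin n), ((S ∩ C k).card : ℝ) * q S := by
      have := (div_le_iff₀ hTpos).1 (hqC k)
      linarith
    rw [hmix (fun S => ((S ∩ C k).card : ℝ))] at h1
    have h2 : ∑ t, ∑ i, w t i * ((F i ∩ C k).card : ℝ) ≤ ∑ t, ((St t ∩ C k).card : ℝ) := by
      refine Finset.sum_le_sum fun t _ => hmix_le (fun S => ((S ∩ C k).card : ℝ)) t _ fun i hi => ?_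
      rw [hStF]
      exact_mod_cast Finset.card_le_card
        (Finset.inter_subset_inter_right (hFanti _ _ (hwle t i hi)))
    exact_mod_cast h1.trans h2
  · have h1 := sum_le_relaxed hT r v C ℓ q hqOpt S hS
    rw [hmix (mnlRev r v)] at h1
    obtain ⟨s, rfl⟩ : ∃ s, T = s + 1 := ⟨T - 1, by omega⟩
    rw [Fin.sum_univ_castSucc (fun t => ∑ i, w t i * mnlRev r v (F i))] at h1
    rw [Fin.sum_univ_succ (fun t => mnlRev r v (St t))]
    have h2 : ∑ t : Fin s, ∑ i, w t.castSucc i * mnlRev r v (F i)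
        ≤ ∑ t : Fin s, mnlRev r v (St t.succ) := by
      refine Finset.sum_le_sum fun t _ => hmix_le (mnlRev r v) _ _ fun i hi => ?_
      rw [hStF]
      exact mnlRev_le_of_subset r v C ℓ q hq hqOpt
        (hFanti _ _ (hwge t.castSucc t.succ (by simp) i hi)) (hpos _)
    have h3 := hmix_le (mnlRev r v) (Fin.last s) _ fun i _ => mnlRev_le_iSup r v hr hv (F i)
    have h4 := mnlRev_nonneg r v hr hv (St 0)
    linarith
end

section
/- Assume ℓ_k ≤ T·|C_k| for all k. Let q* be an optimal solution to the relaxed problem whose support is contained in a nested family S^{(1)} ⊋ S^{(2)} ⊋ ⋯ ⊋ S^{(n₀)} of subsets of N, define τ_0 = 0, τ_i = ⌈T·∑_{j=1}^i q*(S^{(j)})⌉, and S̃_t = S^{(i)} for τ_{i−1} < t ≤ τ_i. Let v_min = min_{i∈N} v_i and v_max = max_{i∈N} v_i. Then ∑_{t=1}^T R(S̃_t) ≥ (1 − (n·v_max + 1)/(T·v_min))·∑_{t=1}^T R(S_t) for every feasible {S_t}_{t=1}^T of the customization problem; i.e., {S̃_t} is a (1 − (n·v_max + 1)/(T·v_min))-approximation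 to the customization problem. -/
/-!
Write `W S = ∑ i ∈ S, r i * v i`, `V S = ∑ i ∈ S, v i`, and let `Z` be the optimal value of the
relaxed problem.

The empirical distribution of a feasible tuple is feasible for the relaxed problem, so every
feasible tuple has total revenue at most `T * Z` (`sum_mnlRev_le`). The tuple offering the full
assortment to everybody is feasible, whence `R(N) ≤ Z`.

The sets `F i` are laid out along the interval `(0, T]`, `F i` occupying a piece of length
`T * q (F i)`. Then `T * Z` is the integral of the revenue along the interval, and `∑ t, R(S̃_t)` is
its left-endpoint Riemann sum. The error of this sum is at most the total positive variation of
`i ↦ R(F i)`, which is controlled by a monotone potential (`riemann_error`). Along a decreasing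
chain of sets the potential `W(N) * φ(S)` works, where `φ(S) = 1 / (1 + max (V S) v_min)`
(`mnlRev_sub_le`): shrinking a nonempty assortment gains revenue only through its denominator, and
the empty assortment earns nothing. As `0 ≤ φ ≤ 1 / (1 + v_min)`, the error is at most
`W(N) / (1 + v_min) = R(N) (1 + V(N)) / (1 + v_min) ≤ Z (n v_max + 1) / v_min`.
-/

open Finset

/-- The length of `(t, t + 1] ∩ (0, x]`. -/
noncomputable def clampUnit (t : ℕ) (x : ℝ) : ℝ := max 0 (min 1 (x - t))

lemma clampUnit_mono (t : ℕ) {x y : ℝ} (h : x ≤ y) : clampUnit t x ≤ clampUnit t y := by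
  unfold clampUnit
  gcongr

lemma sum_clampUnit (T : ℕ) (x : ℝ) (hx : 0 ≤ x) :
    ∑ t ∈ Finset.range T, clampUnit t x = min x T := by
  induction T with
  | zero => simp [hx]
  | succ T ih =>
    rw [Finset.sum_range_succ, ih]
    unfold clampUnit
    push_cast
    grind

lemma sum_fin_sub (N : ℕ) (f : ℕ → ℝ) :
    ∑ i : Fin N, (f (i + 1) - f i) = f N - f 0 := by
  rw [Fin.sum_univ_eq_sum_range (fun i => f (i + 1) - f i) N, Finset.sum_range_sub]

/-- For the step function on `(0, T]` with value `R i` on `(x i, x (i + 1)]`, the left-endpoint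
Riemann sum with unit mesh falls short of the integral by at most `B`, provided the increases of
`R` are dominated by those of a monotone potential `φ` with values in `[0, B]`. -/
lemma riemann_error (T N : ℕ) (x : ℕ → ℝ) (hx : Monotone x) (hx0 : x 0 = 0) (hxN : x N = T)
    (R φ : Fin N → ℝ) (B : ℝ) (hφ : Monotone φ) (hφ0 : ∀ i, 0 ≤ φ i) (hφB : ∀ i, φ i ≤ B)
    (hB : 0 ≤ B)
    (hR : ∀ i j, i ≤ j → R j - R i ≤ φ j - φ i) (idx : Fin T → Fin N)
    (hl : ∀ t, x (idx t) ≤ t) (hu : ∀ t : Fin T, ((t : ℕ) : ℝ) < x (idx t + 1)) :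
    ∑ i : Fin N, R i * (x (i + 1) - x i) ≤ ∑ t : Fin T, R (idx t) + B := by
  -- `p t i` is the length of `(t, t + 1] ∩ (x i, x (i + 1)]`
  set p : Fin T → Fin N → ℝ := fun t i => clampUnit t (x (i + 1)) - clampUnit t (x i) with hp
  have hxm : ∀ m ≤ N, ∑ t : Fin T, clampUnit t (x m) = x m := by
    intro m hm
    have h0 : 0 ≤ x m := hx0 ▸ hx (Nat.zero_le m)
    rw [Fin.sum_univ_eq_sum_range (fun t => clampUnit t (x m)) T, sum_clampUnit T _ h0]
    exact min_eq_left (hxN ▸ hx hm)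
  have hcol : ∀ i, ∑ t, p t i = x (i + 1) - x i := by
    intro i
    simp only [hp, Finset.sum_sub_distrib]
    rw [hxm _ i.2, hxm _ i.2.le]
  have hrow : ∀ t, ∑ i, p t i = 1 := by
    intro t
    simp only [hp]
    rw [sum_fin_sub N (fun i => clampUnit t (x i)), hxN, hx0]
    have h1 : ((t : ℕ) : ℝ) + 1 ≤ T := by exact_mod_cast t.2
    have h2 : (0 : ℝ) ≤ ((t : ℕ) : ℝ) := by positivity
    unfold clampUnit
    grind
  have hp0 : ∀ t i, 0 ≤ p t i := fun t i =>
    sub_nonneg.2 (clampUnit_mono t (hx (Nat.le_succ _)))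
  have hppos : ∀ t i, p t i ≠ 0 → (t : ℝ) < x (i + 1) ∧ x i < t + 1 := by
    intro t i h
    have hm := hx (Nat.le_succ i)
    simp only [hp, clampUnit] at h
    grind
  let ψ : ℕ → ℝ := fun t => if h : t < T then φ (idx ⟨t, h⟩) else B
  have hψ : ∀ t : Fin T, ψ t = φ (idx t) := fun t => by simp [ψ]
  have key : ∀ t i, (R i - R (idx t)) * p t i ≤ (ψ (t + 1) - ψ t) * p t i := by
    intro t i
    by_cases h : p t i = 0
    · simp [h]
    obtain ⟨h1, h2⟩ := hppos t i h
    refine mul_le_mul_of_nonneg_right ?_ (hp0 t i)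
    have hle : idx t ≤ i := by
      by_contra! hlt
      have : x (i + 1) ≤ x (idx t) := hx hlt
      linarith [hl t]
    have hψi : φ i ≤ ψ (t + 1) := by
      by_cases hT : (t : ℕ) + 1 < T
      · simp only [ψ, hT, dif_pos]
        apply hφ
        by_contra! hlt
        have h3 : x (idx ⟨t + 1, hT⟩ + 1) ≤ x i := hx hlt
        have h4 := hu ⟨t + 1, hT⟩
        push_cast at h4
        linarith
      · simp only [ψ, hT, dif_neg, not_false_eq_true]
        exact hφB i
    rw [hψ]
    linarith [hR _ _ hle]
  have e1 : ∑ i : Fin N, R i * (x (i + 1) - x i) = ∑ t, ∑ i, R i * p t i := by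
    rw [Finset.sum_comm]
    simp_rw [← Finset.mul_sum, hcol]
  have e2 : ∑ t : Fin T, R (idx t) = ∑ t, ∑ i, R (idx t) * p t i := by
    simp_rw [← Finset.mul_sum, hrow, mul_one]
  have e3 : ∑ t : Fin T, ∑ i, (ψ (t + 1) - ψ t) * p t i = ψ T - ψ 0 := by
    simp_rw [← Finset.mul_sum, hrow, mul_one]
    exact sum_fin_sub T ψ
  have e4 : ψ T = B := by simp [ψ]
  have e5 : 0 ≤ ψ 0 := by
    simp only [ψ]
    split_ifs
    · exact hφ0 _
    · exact hB
  have e6 := Finset.sum_le_sum fun t (_ : t ∈ Finset.univ) =>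
    Finset.sum_le_sum fun i (_ : i ∈ Finset.univ) => key t i
  simp only [sub_mul, Finset.sum_sub_distrib] at e6 e3
  rw [e1, e2]
  linarith

/-- The potential dominating revenue increases along shrinking assortments. Here `m` is a lower
bound on the preference weights; taking the maximum with `m` changes the value only at `∅`. -/
noncomputable def pot {n : ℕ} (v : Fin n → ℝ) (m : ℝ) (S : Finset (Fin n)) : ℝ :=
  1 / (1 + max (∑ i ∈ S, v i) m)

lemma pot_anti {n : ℕ} (v : Fin n → ℝ) (hv : ∀ i, 0 < v i) {m : ℝ} (hm : 0 < m)
    {A B : Finset (Fin n)} (h : A ⊆ B) : pot v m B ≤ pot v m A := by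
  have hs : ∑ i ∈ A, v i ≤ ∑ i ∈ B, v i :=
    Finset.sum_le_sum_of_subset_of_nonneg h fun i _ _ => (hv i).le
  have := lt_max_of_lt_right (b := ∑ i ∈ A, v i) hm
  unfold pot
  gcongr

lemma mnlRev_sub_le {n : ℕ} (r v : Fin n → ℝ) (hr : ∀ i, 0 ≤ r i) (hv : ∀ i, 0 < v i)
    {m : ℝ} (hm : 0 < m) (hmv : ∀ i, m ≤ v i) {A B : Finset (Fin n)} (h : A ⊆ B) :
    mnlRev r v A - mnlRev r v B ≤
      (∑ i, r i * v i) * pot v m A - (∑ i, r i * v i) * pot v m B := by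
  have hw : ∀ i, 0 ≤ r i * v i := fun i => mul_nonneg (hr i) (hv i).le
  have hW : 0 ≤ ∑ i, r i * v i := Finset.sum_nonneg fun i _ => hw i
  have hpot := pot_anti v hv hm h
  rw [← mul_sub]
  rcases A.eq_empty_or_nonempty with rfl | hA
  · have h0 : mnlRev r v ∅ = 0 := by simp [mnlRev]
    have := mnlRev_nonneg r v hr hv B
    have := mul_nonneg hW (sub_nonneg.2 hpot)
    linarith
  · have hmax : ∀ S : Finset (Fin n), S.Nonempty → pot v m S = 1 / (1 + ∑ i ∈ S, v i) := by
      rintro S ⟨a, ha⟩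
      have : v a ≤ ∑ i ∈ S, v i := Finset.single_le_sum (fun i _ => (hv i).le) ha
      rw [pot, max_eq_left ((hmv a).trans this)]
    have hWA : ∑ i ∈ A, r i * v i ≤ ∑ i, r i * v i :=
      Finset.sum_le_sum_of_subset_of_nonneg (Finset.subset_univ _) fun i _ _ => hw i
    have hWAB : ∑ i ∈ A, r i * v i ≤ ∑ i ∈ B, r i * v i :=
      Finset.sum_le_sum_of_subset_of_nonneg h fun i _ _ => hw i
    have e : ∀ S : Finset (Fin n), S.Nonempty →
        mnlRev r v S = (∑ i ∈ S, r i * v i) * pot v m S := by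
      intro S hS
      rw [hmax S hS, mnlRev, mul_one_div]
    rw [e A hA, e B (hA.mono h)]
    have hB0 : 0 ≤ pot v m B := by
      have := lt_max_of_lt_right (b := ∑ i ∈ B, v i) hm
      unfold pot
      positivity
    have t1 := mul_le_mul_of_nonneg_right hWAB hB0
    have t2 := mul_le_mul_of_nonneg_right hWA (sub_nonneg.2 hpot)
    linarith

/-- The empirical distribution of a tuple of assortments. -/
noncomputable def empirical {n T : ℕ} (S : Fin T → Finset (Fin n)) (A : Finset (Fin n)) : ℝ :=
  ∑ t, if S t = A then 1 / (T : ℝ) else 0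

lemma sum_empirical {n T : ℕ} (S : Fin T → Finset (Fin n)) (f : Finset (Fin n) → ℝ) :
    ∑ A, f A * empirical S A = (∑ t, f (S t)) / T := by
  simp only [empirical, Finset.mul_sum]
  rw [Finset.sum_comm, Finset.sum_div]
  refine Finset.sum_congr rfl fun t _ => ?_
  simp [div_eq_mul_inv]

/-- The relaxed optimum, scaled by `T`, bounds the customization problem from above. -/
lemma sum_mnlRev_le {n K T : ℕ} (hT : 1 ≤ T) (r v : Fin n → ℝ)
    (C : Fin K → Finset (Fin n)) (ℓ : Fin K → ℕ) (q : Finset (Fin n) → ℝ)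
    (hqOpt : ∀ q' : Finset (Fin n) → ℝ, relFeasible T C ℓ q' →
      ∑ S : Finset (Fin n), mnlRev r v S * q' S ≤ ∑ S : Finset (Fin n), mnlRev r v S * q S)
    (S : Fin T → Finset (Fin n)) (hS : ∀ k, ℓ k ≤ ∑ t : Fin T, ((S t ∩ C k).card)) :
    ∑ t, mnlRev r v (S t) ≤ T * ∑ A, mnlRev r v A * q A := by
  have hT0 : (0 : ℝ) < T := by exact_mod_cast hT
  have hf : relFeasible T C ℓ (empirical S) := by
    refine ⟨fun A => Finset.sum_nonneg fun t _ => ?_, ?_, fun k => ?_⟩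
    · split_ifs <;> positivity
    · have := sum_empirical S (fun _ => 1)
      simp only [one_mul] at this
      rw [this]
      simp [hT0.ne']
    · rw [sum_empirical S (fun A => ((A ∩ C k).card : ℝ))]
      gcongr
      exact_mod_cast hS k
  have := hqOpt _ hf
  rw [sum_empirical, div_le_iff₀ hT0] at this
  linarith

theorem stmt14 {n K T : ℕ} (hn : 0 < n) (hT : 1 ≤ T)
    (r v : Fin n → ℝ) (hr : ∀ i, 0 ≤ r i) (hv : ∀ i, 0 < v i)
    (C : Fin K → Finset (Fin n)) (ℓ : Fin K → ℕ)
    (hfeas : ∀ k, ℓ k ≤ T * (C k).card)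
    -- q* is an optimal solution of the relaxed problem
    (q : Finset (Fin n) → ℝ) (hq : relFeasible T C ℓ q)
    (hqOpt : ∀ q' : Finset (Fin n) → ℝ, relFeasible T C ℓ q' →
      ∑ S : Finset (Fin n), mnlRev r v S * q' S ≤ ∑ S : Finset (Fin n), mnlRev r v S * q S)
    -- whose support is contained in a strictly nested family S^{(1)} ⊋ ⋯ ⊋ S^{(n₀)}
    (n₀ : ℕ) (F : Fin n₀ → Finset (Fin n))
    (hFnest : ∀ i j : Fin n₀, i < j → F j ⊂ F i)
    (hsupp : ∀ S : Finset (Fin n), q S ≠ 0 → ∃ i : Fin n₀, S = F i)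
    -- the rounded solution: S̃_t = S^{(i)} for τ_{i-1} < t ≤ τ_i, τ_i = ⌈T ∑_{j≤i} q(S^{(j)})⌉
    (St : Fin T → Finset (Fin n))
    (hSt : ∀ (t : Fin T) (i : Fin n₀),
      ⌈(T : ℝ) * ∑ j ∈ Finset.Iio i, q (F j)⌉₊ < (t : ℕ) + 1 →
      (t : ℕ) + 1 ≤ ⌈(T : ℝ) * ∑ j ∈ Finset.Iic i, q (F j)⌉₊ →
      St t = F i) :
    ∀ S : Fin T → Finset (Fin n), (∀ k, ℓ k ≤ ∑ t : Fin T, ((S t ∩ C k).card)) →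
      (1 - ((n : ℝ) * (⨆ i : Fin n, v i) + 1) / ((T : ℝ) * ⨅ i : Fin n, v i)) *
          ∑ t : Fin T, mnlRev r v (S t)
        ≤ ∑ t : Fin T, mnlRev r v (St t) := by
  intro S hS
  have hT0 : (0 : ℝ) < T := by exact_mod_cast hT
  have : Nonempty (Fin n) := ⟨⟨0, hn⟩⟩
  obtain ⟨hq0, hq1, -⟩ := hq
  set Z := ∑ S : Finset (Fin n), mnlRev r v S * q S with hZ
  set M := ⨆ i : Fin n, v i with hM
  set m := ⨅ i : Fin n, v i with hm
  have hmpos : 0 < m := by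
    obtain ⟨i, hi⟩ := exists_eq_ciInf_of_finite (f := v)
    rw [hm, ← hi]
    exact hv i
  have hmv : ∀ i, m ≤ v i := fun i => ciInf_le (Set.finite_range v).bddBelow i
  have hMv : ∀ i, v i ≤ M := fun i => le_ciSup (Set.finite_range v).bddAbove i
  have hV : ∑ i, v i ≤ n * M := by
    have := Finset.sum_le_sum fun i (_ : i ∈ Finset.univ) => hMv i
    simpa using this
  have hV0 : 0 ≤ ∑ i, v i := Finset.sum_nonneg fun i _ => (hv i).le
  have hR0 := mnlRev_nonneg r v hr hv
  have hZ0 : 0 ≤ Z := Finset.sum_nonneg fun A _ => mul_nonneg (hR0 A) (hq0 A)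
  have hup := sum_mnlRev_le hT r v C ℓ q hqOpt S hS
  have hW0 : 0 ≤ ∑ i, r i * v i := Finset.sum_nonneg fun i _ => mul_nonneg (hr i) (hv i).le
  -- offering the full assortment to everybody is feasible
  have hN : mnlRev r v Finset.univ ≤ Z := by
    have := sum_mnlRev_le hT r v C ℓ q hqOpt (fun _ => Finset.univ)
      (fun k => by simpa using hfeas k)
    simp only [Finset.sum_const, Finset.card_univ, Fintype.card_fin, nsmul_eq_mul] at this
    exact le_of_mul_le_mul_left this hT0
  have hWZ : ∑ i, r i * v i ≤ Z * (1 + ∑ i, v i) := by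
    rwa [mnlRev, div_le_iff₀ (by positivity)] at hN
  have hFinj : Function.Injective F := by
    intro i j h
    rcases lt_trichotomy i j with hij | hij | hij
    · exact absurd h.symm (hFnest i j hij).ne
    · exact hij
    · exact absurd h (hFnest j i hij).ne
  have hFsub : ∀ i j, i ≤ j → F j ⊆ F i := by
    intro i j h
    rcases h.eq_or_lt with rfl | h
    · exact subset_rfl
    · exact (hFnest i j h).subset
  have hsum : ∀ f : Finset (Fin n) → ℝ, ∑ A, f A * q A = ∑ i, f (F i) * q (F i) := by
    intro f
    symm
    refine Finset.sum_of_injOn F hFinj.injOn (by simp) ?_ (by simp)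
    intro A _ hA
    by_contra hne
    obtain ⟨i, rfl⟩ := hsupp A (right_ne_zero_of_mul hne)
    exact hA (by simp)
  -- the breakpoints `T * (q (F 0) + ⋯ + q (F (k - 1)))`
  let x : ℕ → ℝ := fun k => T * ∑ j ∈ Finset.univ.filter (fun j : Fin n₀ => (j : ℕ) < k), q (F j)
  have hIio : ∀ i : Fin n₀, T * ∑ j ∈ Finset.Iio i, q (F j) = x i := by
    intro i
    simp only [x]
    congr 2
    ext j
    simp
  have hIic : ∀ i : Fin n₀, T * ∑ j ∈ Finset.Iic i, q (F j) = x (i + 1) := by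
    intro i
    simp only [x]
    congr 2
    ext j
    simp
  have hxm : Monotone x := by
    intro a b hab
    refine mul_le_mul_of_nonneg_left ?_ hT0.le
    refine Finset.sum_le_sum_of_subset_of_nonneg ?_ fun i _ _ => hq0 _
    intro j
    simp only [Finset.mem_filter, Finset.mem_univ, true_and]
    omega
  have hx0 : x 0 = 0 := by simp [x]
  have hxN : x n₀ = T := by
    have h1 := hsum (fun _ => 1)
    simp only [one_mul, hq1] at h1
    simp [x, ← h1]
  have hxd : ∀ i : Fin n₀, x (i + 1) - x i = T * q (F i) := by
    intro i
    rw [← hIio, ← hIic, ← Finset.Iio_insert, Finset.sum_insert (by simp)]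
    ring
  have hidx : ∀ t : Fin T, ∃ i : Fin n₀, x i ≤ t ∧ (t : ℝ) < x (i + 1) := by
    intro t
    have hex : ∃ k, (t : ℝ) < x k := ⟨n₀, by rw [hxN]; exact_mod_cast t.2⟩
    classical
    have hk := Nat.find_spec hex
    have hmin : ∀ j < Nat.find hex, ¬ (t : ℝ) < x j := fun j hj => Nat.find_min hex hj
    have hle : Nat.find hex ≤ n₀ := Nat.find_min' hex (by rw [hxN]; exact_mod_cast t.2)
    generalize Nat.find hex = k at hk hmin hle
    cases k with
    | zero =>
      rw [hx0] at hk
      exact absurd hk (not_lt.2 (Nat.cast_nonneg _))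
    | succ k => exact ⟨⟨k, hle⟩, not_lt.1 (hmin k (Nat.lt_succ_self k)), hk⟩
  choose idx hl hu using hidx
  have hStF : ∀ t, St t = F (idx t) := by
    intro t
    apply hSt
    · rw [hIio, Nat.lt_succ_iff]
      exact Nat.ceil_le.2 (hl t)
    · rw [hIic]
      exact Nat.lt_ceil.2 (hu t)
  have hpot0 : ∀ A, 0 ≤ pot v m A := by
    intro A
    have := lt_max_of_lt_right (b := ∑ i ∈ A, v i) hmpos
    unfold pot
    positivity
  have hpotB : ∀ A, pot v m A ≤ 1 / (1 + m) := by
    intro A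
    have := le_max_right (∑ i ∈ A, v i) m
    unfold pot
    gcongr
  have herr := riemann_error T n₀ x hxm hx0 hxN (fun i => mnlRev r v (F i))
    (fun i => (∑ i, r i * v i) * pot v m (F i)) ((∑ i, r i * v i) * (1 / (1 + m)))
    (fun i j hij => mul_le_mul_of_nonneg_left (pot_anti v hv hmpos (hFsub i j hij)) hW0)
    (fun i => mul_nonneg hW0 (hpot0 _))
    (fun i => mul_le_mul_of_nonneg_left (hpotB _) hW0)
    (by positivity)
    (fun i j hij => mnlRev_sub_le r v hr hv hmpos hmv (hFsub i j hij)) idx hl hu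
  have hTZ : ∑ i, mnlRev r v (F i) * (x (i + 1) - x i) = T * Z := by
    rw [hZ, hsum, Finset.mul_sum]
    refine Finset.sum_congr rfl fun i _ => ?_
    rw [hxd]
    ring
  simp only [← hStF] at herr
  rw [hTZ] at herr
  have hB : (∑ i, r i * v i) * (1 / (1 + m)) ≤ Z * (n * M + 1) / m := by
    rw [mul_one_div]
    have h1 : ∑ i, r i * v i ≤ Z * (n * M + 1) :=
      hWZ.trans (mul_le_mul_of_nonneg_left (by linarith) hZ0)
    calc _ ≤ (∑ i, r i * v i) / m := by gcongr; linarith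
      _ ≤ _ := by gcongr
  -- for a nonpositive factor the claim is trivial
  rcases le_total (1 - ((n : ℝ) * M + 1) / (T * m)) 0 with hc | hc
  · exact (mul_nonpos_of_nonpos_of_nonneg hc (Finset.sum_nonneg fun t _ => hR0 _)).trans
      (Finset.sum_nonneg fun t _ => hR0 _)
  · refine (mul_le_mul_of_nonneg_left hup hc).trans ?_
    have : (1 - ((n : ℝ) * M + 1) / (T * m)) * (T * Z) = T * Z - Z * (n * M + 1) / m := by
      field_simp
    rw [← hZ, this]
    linarith
end

section
/- Let n ≥ 2 and 0 < ε₁ < 1/2; set δ = ε₁/n and M = n/ε₁. Consider the product universe {1,…,n+1} with revenues and weights r_{n+1} = M/δ, v_{n+1} = δ, and r_i = δ/M, v_i = M for all i ∈ {1,…,n}. Then (a) R(S ∪ {n+1}) ≥ R(S) for every S ⊆ {1,…,n}, and (b) for every nonempty S ⊆ {1,…,n}, 1/((1+ε₁)·|S|) ≤ R(S ∪ {n+1}) ≤ (1+ε₁)/|S|. -/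
/-!
Write `d = ε₁ / n`, so that `M = 1 / d`, and let `k = |S| ≤ n`, so that `k d ≤ ε₁`. Every product of
`S` contributes `d` to the revenue numerator and `1 / d` to the weight, while the special product
contributes `1 / d` and `d`. After clearing `1 / d`,
`R(S) = k d² / (d + k)` and `R(S ∪ {n+1}) = (1 + k d²) / (d + d² + k)`.
Monotonicity reduces to `k d⁴ ≤ d + k`; the lower bound follows from `d + d² ≤ 2 d ≤ ε₁`
(this uses `n ≥ 2`), and the upper bound from `(k d)² ≤ ε₁² ≤ ε₁`.
-/

open Finset

theorem stmt16 (n : ℕ) (hn : 2 ≤ n) (ε₁ : ℝ) (hε₁ : 0 < ε₁) (hε₁' : ε₁ < 1 / 2)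
    (r v : Fin (n + 1) → ℝ)
    -- r_{n+1} = M/δ, v_{n+1} = δ with δ = ε₁/n, M = n/ε₁
    (hrlast : r (Fin.last n) = ((n : ℝ) / ε₁) / (ε₁ / n))
    (hvlast : v (Fin.last n) = ε₁ / n)
    -- r_i = δ/M, v_i = M for i ∈ {1,…,n}
    (hri : ∀ i : Fin (n + 1), (i : ℕ) < n → r i = (ε₁ / n) / ((n : ℝ) / ε₁))
    (hvi : ∀ i : Fin (n + 1), (i : ℕ) < n → v i = (n : ℝ) / ε₁) :
    (∀ S : Finset (Fin (n + 1)), Fin.last n ∉ S →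
      mnlRev r v S ≤ mnlRev r v (insert (Fin.last n) S)) ∧
    (∀ S : Finset (Fin (n + 1)), Fin.last n ∉ S → S.Nonempty →
      1 / ((1 + ε₁) * S.card) ≤ mnlRev r v (insert (Fin.last n) S) ∧
      mnlRev r v (insert (Fin.last n) S) ≤ (1 + ε₁) / S.card) := by
  have hn2 : (2 : ℝ) ≤ n := by exact_mod_cast hn
  have hn0 : (0 : ℝ) < n := by linarith
  obtain ⟨d, hd⟩ : ∃ d, d = ε₁ / n := ⟨_, rfl⟩
  have hM : (n : ℝ) / ε₁ = 1 / d := by rw [hd, one_div_div]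
  have hd0 : 0 < d := by rw [hd]; positivity
  have hnd : n * d = ε₁ := by rw [hd]; field_simp
  have h2d : 2 * d ≤ ε₁ := by nlinarith
  have hd1 : d < 1 := by linarith
  rw [hM, ← hd] at hrlast
  rw [← hd] at hvlast
  simp only [hM, ← hd] at hri hvi
  have hlt : ∀ S : Finset (Fin (n + 1)), Fin.last n ∉ S → ∀ i ∈ S, (i : ℕ) < n := by
    intro S hS i hi
    exact Fin.val_lt_last (fun h => hS (h ▸ hi))
  have hnum : ∀ S : Finset (Fin (n + 1)), Fin.last n ∉ S →
      ∑ i ∈ S, r i * v i = S.card * d := by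
    intro S hS
    rw [Finset.sum_congr rfl (g := fun _ => d), Finset.sum_const, nsmul_eq_mul]
    intro i hi
    rw [hri i (hlt S hS i hi), hvi i (hlt S hS i hi)]
    field_simp
  have hden : ∀ S : Finset (Fin (n + 1)), Fin.last n ∉ S →
      ∑ i ∈ S, v i = S.card * (1 / d) := by
    intro S hS
    rw [Finset.sum_congr rfl (g := fun _ => 1 / d), Finset.sum_const, nsmul_eq_mul]
    intro i hi
    exact hvi i (hlt S hS i hi)
  have hR : ∀ S : Finset (Fin (n + 1)), Fin.last n ∉ S →
      mnlRev r v S = S.card * d ^ 2 / (d + S.card) := by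
    intro S hS
    rw [mnlRev, hnum S hS, hden S hS]
    have hk : (0 : ℝ) ≤ S.card := Nat.cast_nonneg _
    generalize (S.card : ℝ) = k at hk ⊢
    have hpos : 0 < d + k := by positivity
    clear hri hvi hlt hnum hden hM hd hrlast hvlast
    field_simp
  have hR' : ∀ S : Finset (Fin (n + 1)), Fin.last n ∉ S →
      mnlRev r v (insert (Fin.last n) S) =
        (1 + S.card * d ^ 2) / (d + d ^ 2 + S.card) := by
    intro S hS
    rw [mnlRev, Finset.sum_insert hS, Finset.sum_insert hS, hnum S hS, hden S hS, hrlast, hvlast]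
    have hk : (0 : ℝ) ≤ S.card := Nat.cast_nonneg _
    generalize (S.card : ℝ) = k at hk ⊢
    have hpos : 0 < d + k := by positivity
    clear hri hvi hlt hnum hden hR hM hd hrlast hvlast
    have hpos' : 0 < d + d ^ 2 + k := by positivity
    field_simp
    ring
  constructor
  · intro S hS
    rw [hR S hS, hR' S hS]
    have hk : (0 : ℝ) ≤ S.card := Nat.cast_nonneg _
    generalize (S.card : ℝ) = k at hk ⊢
    rw [div_le_div_iff₀ (by positivity) (by positivity)]
    have h4 : d ^ 4 ≤ 1 := pow_le_one₀ hd0.le hd1.le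
    nlinarith [mul_le_mul_of_nonneg_left h4 hk]
  · intro S hS hne
    rw [hR' S hS]
    have hk : (1 : ℝ) ≤ S.card := by exact_mod_cast hne.card_pos
    have hkn : (S.card : ℝ) ≤ n := by
      have hlt' : S.card < Fintype.card (Fin (n + 1)) :=
        Finset.card_lt_univ_of_notMem hS
      rw [Fintype.card_fin] at hlt'
      exact_mod_cast Nat.lt_succ_iff.mp hlt'
    generalize (S.card : ℝ) = k at hk hkn ⊢
    have hk0 : 0 < k := by linarith
    have hkd : k * d ≤ ε₁ := by nlinarith
    constructor
    · rw [div_le_div_iff₀ (by positivity) (by positivity)]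
      have h1 : d + d ^ 2 ≤ ε₁ * k := by nlinarith
      have h2 : 0 ≤ (1 + ε₁) * k * (k * d ^ 2) := by positivity
      nlinarith
    · rw [div_le_div_iff₀ (by positivity) (by positivity)]
      have h1 : (k * d) ^ 2 ≤ ε₁ * k := by
        have : (k * d) ^ 2 ≤ ε₁ ^ 2 := by gcongr
        nlinarith
      have h2 : 0 ≤ (1 + ε₁) * (d + d ^ 2) := by positivity
      nlinarith
end

section
/- Let v_1,…,v_n > 0 and let x_0, x_1,…,x_n be real numbers with x_1 ≥ x_2 ≥ ⋯ ≥ x_n ≥ 0, x_i ≤ x_0 for all i ∈ {1,…,n}, and x_0 + ∑_{i=1}^n v_i x_i = 1. For p = 1,…,n let S_p = {1,…,p} and define q(S_p) = (1 + ∑_{j=1}^p v_j)(x_p − x_{p+1}) (with the convention x_{n+1} = 0) and q(∅) = 1 − ∑_{p=1}^n q(S_p). Then q(S_p) ≥ 0 for all p, q(∅) ≥ 0, q(∅) + ∑_{p=1}^n q(S_p) = 1, and for every i ∈ {1,…,n}, x_i = ∑_{p=1}^n q(S_p)·1[i ∈ S_p]/(1 + ∑_{j∈S_p} v_j). -/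
/-!
Extend `x` by zero to a sequence `y` on `ℕ` and put `d p = y p - y (p + 1) ≥ 0`. Dividing `q(S_p)` by
`1 + ∑_{j ≤ p} v_j` leaves `d p`, and `∑_{p ≥ i} d p` telescopes to `x_i` (`sum_tail_telescope`),
which is the representation of `x_i`. Exchanging the order of summation gives
`∑_p q(S_p) = ∑_p d p + ∑_j v_j x_j = ∑_p d p + 1 - x_0`. The first sum telescopes to the first
entry of `x` (or to `0` if `n = 0`), which is at most `x_0`; hence `q(∅) ≥ 0`.
-/

open Finset

/-- The `min` makes the identity hold also for an empty tail (`N ≤ m`), so that it goes through by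
induction on `N` without side conditions. -/
theorem sum_tail_telescope (y : ℕ → ℝ) (m N : ℕ) :
    ∑ k ∈ Finset.range N, (if m ≤ k then y k - y (k + 1) else 0) = y (min m N) - y N := by
  induction N with
  | zero => simp
  | succ N ih =>
    rw [Finset.sum_range_succ, ih]
    by_cases h : m ≤ N
    · rw [if_pos h, min_eq_left h, min_eq_left (by omega)]
      ring
    · rw [if_neg h, min_eq_right (by omega), min_eq_right (by omega)]
      ring

theorem stmt17 {n : ℕ} (v : Fin n → ℝ) (hv : ∀ i, 0 < v i)
    (x0 : ℝ) (x : Fin n → ℝ)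
    -- x_1 ≥ x_2 ≥ ⋯ ≥ x_n ≥ 0
    (hmono : ∀ i j : Fin n, i ≤ j → x j ≤ x i)
    (hnonneg : ∀ i, 0 ≤ x i)
    -- x_i ≤ x_0
    (hle : ∀ i, x i ≤ x0)
    -- x_0 + ∑ v_i x_i = 1
    (hsum : x0 + ∑ i, v i * x i = 1)
    -- q(S_p) = (1 + ∑_{j=1}^p v_j)(x_p − x_{p+1}), with x_{n+1} = 0
    (qp : Fin n → ℝ)
    (hqp : ∀ p : Fin n, qp p = (1 + ∑ j ∈ Finset.Iic p, v j) *
      (x p - (if h : (p : ℕ) + 1 < n then x ⟨(p : ℕ) + 1, h⟩ else 0)))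
    -- q(∅) = 1 − ∑_p q(S_p)
    (qe : ℝ) (hqe : qe = 1 - ∑ p : Fin n, qp p) :
    (∀ p, 0 ≤ qp p) ∧ 0 ≤ qe ∧ (qe + ∑ p : Fin n, qp p = 1) ∧
    ∀ i : Fin n, x i = ∑ p : Fin n,
      qp p * (if i ∈ Finset.Iic p then (1 : ℝ) else 0) / (1 + ∑ j ∈ Finset.Iic p, v j) := by
  set y : ℕ → ℝ := fun k => if h : k < n then x ⟨k, h⟩ else 0 with hy
  have hyx : ∀ p : Fin n, y p = x p := fun p => by simp [hy]
  have hyn : y n = 0 := by simp [hy]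
  have hq : ∀ p : Fin n,
      qp p = (1 + ∑ j ∈ Finset.Iic p, v j) * (y p - y ((p : ℕ) + 1)) := fun p => by
    rw [hqp p, hyx p]
  have hpos : ∀ p : Fin n, 0 < 1 + ∑ j ∈ Finset.Iic p, v j := fun p => by
    have := Finset.sum_nonneg (s := Finset.Iic p) (fun j _ => (hv j).le)
    linarith
  have hd : ∀ p : Fin n, 0 ≤ y p - y ((p : ℕ) + 1) := fun p => by
    rw [hyx p]
    by_cases h : (p : ℕ) + 1 < n
    · have := hmono p ⟨(p : ℕ) + 1, h⟩ (Fin.le_def.2 (Nat.le_succ _))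
      simpa [hy, h] using this
    · simpa [hy, h] using hnonneg p
  have htail : ∀ i : Fin n,
      ∑ p : Fin n, (if i ≤ p then y p - y ((p : ℕ) + 1) else 0) = x i := fun i => by
    have h := sum_tail_telescope y i n
    rw [min_eq_left i.2.le, hyn, hyx, sub_zero, Finset.sum_range] at h
    simpa only [Fin.le_def] using h
  have htotal : ∑ p : Fin n, (y p - y ((p : ℕ) + 1)) ≤ x0 := by
    have h := sum_tail_telescope y 0 n
    rw [Finset.sum_range] at h
    simp only [Nat.zero_le, if_true, Nat.zero_min, hyn, sub_zero] at h
    rw [h]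
    by_cases hn : 0 < n
    · simpa [hy, hn] using hle ⟨0, hn⟩
    · -- Without products, `x0 = 1` by the normalization.
      obtain rfl : n = 0 := by omega
      rw [hyn]
      simp at hsum
      linarith
  have hswap : ∑ p : Fin n, (∑ j ∈ Finset.Iic p, v j) * (y p - y ((p : ℕ) + 1))
      = ∑ j, v j * x j := by
    calc _ = ∑ p : Fin n, ∑ j : Fin n,
          v j * (if j ≤ p then y p - y ((p : ℕ) + 1) else 0) := by
          refine Finset.sum_congr rfl fun p _ => ?_
          rw [Finset.sum_mul]
          simp only [mul_ite, mul_zero]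
          rw [← Finset.sum_filter]
          refine Finset.sum_congr ?_ fun _ _ => rfl
          ext j
          simp
      _ = _ := by
          rw [Finset.sum_comm]
          refine Finset.sum_congr rfl fun j _ => ?_
          rw [← Finset.mul_sum, htail]
  have hqsum : ∑ p, qp p = ∑ p : Fin n, (y p - y ((p : ℕ) + 1)) + ∑ j, v j * x j := by
    rw [← hswap, ← Finset.sum_add_distrib]
    refine Finset.sum_congr rfl fun p _ => ?_
    rw [hq p]
    ring
  refine ⟨fun p => ?_, by linarith, by linarith, fun i => ?_⟩
  · rw [hq p]
    exact mul_nonneg (hpos p).le (hd p)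
  · rw [← htail i]
    refine Finset.sum_congr rfl fun p _ => ?_
    have := (hpos p).ne'
    rw [hq p]
    simp only [Finset.mem_Iic]
    split_ifs
    · field_simp
    · simp
end
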